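/- Suppose R := liminf_{i→∞} a_i is finite (so R ≥ 2). Then M(α,γ_*) ≥ M_1, where M_1 := (1/4)·(1 − 2/(R_* − θ_2))·(1 − (1/max{4, R_**})·(1 + θ_1²/(1−θ_1))) / (1 + (1/max{4, R_**})·(θ_1 − 1/(R_* − θ_2))). In particular ρ(α) ≥ M_1. -/

import Mathlib

open Filter Finset

attribute [local instance] Classical.propDecidable

/-- Distance from `x` to the nearest integer, `‖x‖`. -/
noncomputable def nint (x : ℝ) : ℝ := |x - round x|

/-- The two-sided inhomogeneous approximation constant
`M(α,γ) = liminf_{|n|→∞} |n|·‖nα-γ‖`. -/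
noncomputable def Mval (α γ : ℝ) : ℝ :=
  Filter.liminf (fun n : ℤ => (|n| : ℝ) * nint (n * α - γ)) Filter.cofinite

/-- `ρ(α) = sup { M(α,γ) : γ ∉ ℤ + αℤ }`. -/
noncomputable def rho (α : ℝ) : ℝ :=
  sSup {m : ℝ | ∃ γ : ℝ, (¬∃ p q : ℤ, γ = (p : ℝ) + (q : ℝ) * α) ∧ m = Mval α γ}

/-- The tails `α_i` of the nearest integer continued fraction expansion of `α`. -/
noncomputable def nicfT (α : ℝ) : ℕ → ℝ
  | 0 => α
  | i + 1 =>
    if Int.fract (nicfT α i)⁻¹ ≤ 1 / 2 then Int.fract (nicfT α i)⁻¹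
    else 1 - Int.fract (nicfT α i)⁻¹

/-- The partial quotients `a_i` (meaningful for `i ≥ 1`) of the NICF expansion. -/
noncomputable def nicfA (α : ℝ) : ℕ → ℤ
  | 0 => 0
  | i + 1 => if Int.fract (nicfT α i)⁻¹ ≤ 1 / 2 then ⌊(nicfT α i)⁻¹⌋ else ⌈(nicfT α i)⁻¹⌉

/-- The signs `ε_i` of the NICF expansion (`ε_1 = 1`). -/
noncomputable def nicfE (α : ℝ) : ℕ → ℤ
  | 0 => 1
  | 1 => 1
  | i + 2 => if Int.fract (nicfT α i)⁻¹ ≤ 1 / 2 then 1 else -1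

/-- `nicfD α n = D_{n-1} = α_0 α_1 ⋯ α_{n-1}` (so `nicfD α 0 = 1`, `nicfD α 1 = α`). -/
noncomputable def nicfD (α : ℝ) (n : ℕ) : ℝ := ∏ j ∈ Finset.range n, nicfT α j

/-- The number of indices `1 ≤ k ≤ i` with `a_k` odd. -/
noncomputable def oddIdx (α : ℝ) (i : ℕ) : ℕ :=
  ((Finset.Icc 1 i).filter fun k => Odd (nicfA α k)).card

/-- `λ_i`: zero if `a_i` is even, `(-1)^j` if `a_i = a_{n_j}` is the `j`-th odd partial
quotient. -/
noncomputable def lamStar (α : ℝ) (i : ℕ) : ℤ :=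
  if Odd (nicfA α i) then (-1) ^ oddIdx α i else 0

/-- `γ_* = Σ_{i≥1} (a_i - 1 + ε_i + λ_i)/2 · D_{i-1}`. -/
noncomputable def gammaStar (α : ℝ) : ℝ :=
  ∑' k : ℕ,
    (((nicfA α (k + 1) : ℝ) - 1 + (nicfE α (k + 1) : ℝ) + (lamStar α (k + 1) : ℝ)) / 2) *
      nicfD α (k + 1)

/-- `λ'_i`: zero if `a_i` is even, one if `a_i` is odd. -/
noncomputable def lamStar2 (α : ℝ) (i : ℕ) : ℤ := if Odd (nicfA α i) then 1 else 0

/-- `γ_** = Σ_{i≥1} (a_i + λ'_i)/2 · D_{i-1}`. -/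
noncomputable def gammaStar2 (α : ℝ) : ℝ :=
  ∑' k : ℕ, (((nicfA α (k + 1) : ℝ) + (lamStar2 α (k + 1) : ℝ)) / 2) * nicfD α (k + 1)

/-- The denominators `q_i`: `q_0 = 1`, `q_1 = a_1`, `q_i = a_i q_{i-1} + ε_i q_{i-2}`. -/
noncomputable def qseq (α : ℝ) : ℕ → ℤ
  | 0 => 1
  | 1 => nicfA α 1
  | i + 2 => nicfA α (i + 2) * qseq α (i + 1) + nicfE α (i + 2) * qseq α i

/-- `ᾱ_i = q_{i-1}/q_i` (with `ᾱ_0 = 0`). -/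
noncomputable def abar (α : ℝ) (i : ℕ) : ℝ :=
  if i = 0 then 0 else (qseq α (i - 1) : ℝ) / (qseq α i : ℝ)

/-- `δ_i = -(-ε_1)(-ε_2)⋯(-ε_{i+1})`. -/
noncomputable def deltaSeq (α : ℝ) (i : ℕ) : ℤ := -∏ j ∈ Finset.Icc 1 (i + 1), (-nicfE α j)

/-- `d_n^- = (Σ_{i=1}^n t_i δ_{i-1} q_{i-1}) / (δ_{n-1} q_n)` for `γ_*` (so `t_i = λ_i`). -/
noncomputable def dminus (α : ℝ) (n : ℕ) : ℝ :=
  (∑ i ∈ Finset.Icc 1 n, (lamStar α i : ℝ) * (deltaSeq α (i - 1) : ℝ) * (qseq α (i - 1) : ℝ)) /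
    ((deltaSeq α (n - 1) : ℝ) * (qseq α n : ℝ))

/-- `d_n^+ = (Σ_{i=n+1}^∞ t_i D_{i-1}) / D_{n-1}` for `γ_*` (so `t_i = λ_i`). -/
noncomputable def dplus (α : ℝ) (n : ℕ) : ℝ :=
  (∑' k : ℕ, (lamStar α (n + 1 + k) : ℝ) * nicfD α (n + 1 + k)) / nicfD α n

/-- `d_n^-` for `γ_**` (so `t_i = λ'_i`). -/
noncomputable def dminus2 (α : ℝ) (n : ℕ) : ℝ :=
  (∑ i ∈ Finset.Icc 1 n, (lamStar2 α i : ℝ) * (deltaSeq α (i - 1) : ℝ) * (qseq α (i - 1) : ℝ)) /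
    ((deltaSeq α (n - 1) : ℝ) * (qseq α n : ℝ))

/-- `d_n^+` for `γ_**` (so `t_i = λ'_i`). -/
noncomputable def dplus2 (α : ℝ) (n : ℕ) : ℝ :=
  (∑' k : ℕ, (lamStar2 α (n + 1 + k) : ℝ) * nicfD α (n + 1 + k)) / nicfD α n

/-- `i ∈ S(γ_*)`: `|d_i^-| ≤ 1 - ᾱ_i` and `-(1-ε_{i+1}α_i) ≤ d_i^+ ≤ 1+ε_{i+1}α_i`. -/
def inS (α : ℝ) (i : ℕ) : Prop :=
  |dminus α i| ≤ 1 - abar α i ∧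
    -(1 - (nicfE α (i + 1) : ℝ) * nicfT α i) ≤ dplus α i ∧
      dplus α i ≤ 1 + (nicfE α (i + 1) : ℝ) * nicfT α i

/-- `i ∈ S(γ_**)`. -/
def inS2 (α : ℝ) (i : ℕ) : Prop :=
  |dminus2 α i| ≤ 1 - abar α i ∧
    -(1 - (nicfE α (i + 1) : ℝ) * nicfT α i) ≤ dplus2 α i ∧
      dplus2 α i ≤ 1 + (nicfE α (i + 1) : ℝ) * nicfT α i

/-- The remainders `γ_i` of the alpha-expansion of `γ`: `γ_0 = γ`,
`γ_{i+1} = {γ_i/α_i}`. -/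
noncomputable def gSeq (α γ : ℝ) : ℕ → ℝ
  | 0 => γ
  | i + 1 => Int.fract (gSeq α γ i / nicfT α i)

/-- The coefficients `c_i` (for `i ≥ 1`) of the alpha-expansion of `γ`:
`c_{i+1} = ⌊γ_i/α_i⌋`. -/
noncomputable def cCoef (α γ : ℝ) (i : ℕ) : ℤ := ⌊gSeq α γ (i - 1) / nicfT α (i - 1)⌋


/-- Constants and their relations. -/
structure Cst (r Rs X θ Y θ2 m : ℝ) : Prop where
  hc : (r = 2 ∧ Rs = 3 ∧ X = 4 ∧ θ2 = 1/2) ∨ (r = 3 ∧ Rs = 3 ∧ X = 4 ∧ θ2 * (X - θ2) = 1) ∨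
    (r = 4 ∧ Rs = 5 ∧ X = 4 ∧ θ2 * (X - θ2) = 1) ∨
    (5 ≤ r ∧ Rs = r ∧ X = r + 1 ∧ θ2 * (X - θ2) = 1) ∨
    (6 ≤ r ∧ Rs = r + 1 ∧ X = r ∧ θ2 * (X - θ2) = 1)
  hθ : θ * (Rs + θ) = 1
  hθ0 : 0 < θ
  hY : Y * (1 - θ) = θ
  h20 : 0 < θ2
  h21 : θ2 ≤ 1/2
  hm : m * ((Rs - θ2) * (X + θ) - 1) = (X + θ - 1 - Y) * (Rs - θ2 - 2)

namespace Cst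
variable {r Rs X θ Y θ2 m : ℝ}

lemma hRs3 (h : Cst r Rs X θ Y θ2 m) : 3 ≤ Rs := by
  rcases h.hc with h|h|h|h|h <;> linarith [h.1, h.2.1]
lemma hX4 (h : Cst r Rs X θ Y θ2 m) : 4 ≤ X := by
  rcases h.hc with h|h|h|h|h <;> linarith [h.1, h.2.2.1]
lemma hr2 (h : Cst r Rs X θ Y θ2 m) : 2 ≤ r := by
  rcases h.hc with h|h|h|h|h <;> linarith [h.1, h.2.2.1]
lemma hrRs (h : Cst r Rs X θ Y θ2 m) : r ≤ Rs := by
  rcases h.hc with h|h|h|h|h <;> linarith [h.1, h.2.1]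
lemma hRsr (h : Cst r Rs X θ Y θ2 m) : Rs ≤ r + 1 := by
  rcases h.hc with h|h|h|h|h <;> linarith [h.1, h.2.1]
lemma hXRs (h : Cst r Rs X θ Y θ2 m) : X ≤ Rs + 1 := by
  rcases h.hc with h|h|h|h|h <;> linarith [h.1, h.2.1, h.2.2.1]
lemma hRsX (h : Cst r Rs X θ Y θ2 m) : Rs ≤ X + 1 := by
  rcases h.hc with h|h|h|h|h <;> linarith [h.1, h.2.1, h.2.2.1]
lemma hrX (h : Cst r Rs X θ Y θ2 m) : r ≤ X := by
  rcases h.hc with h|h|h|h|h <;> linarith [h.1, h.2.1, h.2.2.1]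

lemma hθ1 (h : Cst r Rs X θ Y θ2 m) : θ ≤ 0.303 := by
  by_contra hh; push Not at hh; nlinarith [h.hθ, h.hRs3]
lemma hθ5 (h : Cst r Rs X θ Y θ2 m) (h5 : 5 ≤ Rs) : θ ≤ 0.1927 := by
  by_contra hh; push Not at hh; nlinarith [h.hθ]
lemma hθRs (h : Cst r Rs X θ Y θ2 m) : θ * Rs ≤ 1 := by nlinarith [h.hθ, sq_nonneg θ]
lemma hYRs (h : Cst r Rs X θ Y θ2 m) : Y * Rs = 1 + θ := by
  have h1 : (1 - θ) ≠ 0 := by linarith [h.hθ1]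
  have : (1 - θ) * (Y * Rs) = (1 - θ) * (1 + θ) := by linear_combination Rs * h.hY + h.hθ
  exact mul_left_cancel₀ h1 this
lemma hY1 (h : Cst r Rs X θ Y θ2 m) : Y ≤ 0.4344 := by nlinarith [h.hYRs, h.hRs3, h.hθ1]
lemma hY5 (h : Cst r Rs X θ Y θ2 m) (h5 : 5 ≤ Rs) : Y ≤ 0.2386 := by
  nlinarith [h.hYRs, h.hθ5 h5]
lemma hY0 (h : Cst r Rs X θ Y θ2 m) : 0 < Y := by nlinarith [h.hY, h.hθ1, h.hθ0]
lemma hθY (h : Cst r Rs X θ Y θ2 m) : θ ≤ Y := by nlinarith [h.hY, h.hY0, h.hθ0]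
lemma hYB (h : Cst r Rs X θ Y θ2 m) : Y * (Rs + θ) = 1 + Y := by
  linear_combination h.hYRs - h.hY

lemma hDpos (h : Cst r Rs X θ Y θ2 m) : 5 < (Rs - θ2) * (X + θ) - 1 := by
  nlinarith [h.hRs3, h.hX4, h.hθ0, h.h21]
lemma hm0 (h : Cst r Rs X θ Y θ2 m) : 0 < m := by
  have h1 := h.hDpos
  have : 0 < m * ((Rs - θ2) * (X + θ) - 1) := by
    rw [h.hm]
    apply mul_pos
    · linarith [h.hX4, h.hθ0, h.hY1]
    · linarith [h.hRs3, h.h21]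
  exact pos_of_mul_pos_left this (by linarith)
/-- `m ≤ 1 - 2/Rs`. -/
lemma hmR (h : Cst r Rs X θ Y θ2 m) : m * Rs ≤ Rs - 2 := by
  have h1 := h.hDpos
  have hA : 0 < Rs - θ2 := by linarith [h.hRs3, h.h21]
  have h2 : m * Rs * ((Rs - θ2) * (X + θ) - 1) ≤ (Rs - 2) * ((Rs - θ2) * (X + θ) - 1) := by
    have e1 : m * Rs * ((Rs - θ2) * (X + θ) - 1) = (X + θ - 1 - Y) * (Rs * (Rs - θ2 - 2)) := by
      linear_combination Rs * h.hm
    rw [e1]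
    have e2 : Rs * (Rs - θ2 - 2) ≤ (Rs - 2) * (Rs - θ2) := by linarith [h.h20]
    have e3 : 0 < X + θ - 1 - Y := by linarith [h.hX4, h.hθ0, h.hY1]
    have e4 : (X + θ - 1 - Y) * (Rs - θ2) ≤ (Rs - θ2) * (X + θ) - 1 := by
      nlinarith [h.hY0, h.hRs3, h.h21]
    calc _ ≤ (X + θ - 1 - Y) * ((Rs - 2) * (Rs - θ2)) := by gcongr
      _ = (Rs - 2) * ((X + θ - 1 - Y) * (Rs - θ2)) := by ring
      _ ≤ _ := by gcongr; linarith [h.hRs3]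
  exact le_of_mul_le_mul_right h2 (by linarith)
lemma hm1 (h : Cst r Rs X θ Y θ2 m) : m ≤ 1 := by nlinarith [h.hmR, h.hRs3, h.hm0]
lemma hm3 (h : Cst r Rs X θ Y θ2 m) (h3 : Rs = 3) : m ≤ 0.2 := by
  have h1 := h.hDpos
  have hX : X = 4 := by rcases h.hc with h|h|h|h|h <;> linarith [h.1, h.2.1, h.2.2.1]
  have h4 := h.hm
  have h5 := h.hm0
  have h2 : 0.26 ≤ θ2 := by
    rcases h.hc with h'|h'|h'|h'|h' <;> try linarith [h'.1, h'.2.1, h'.2.2.2]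
    have := h'.2.2.2
    rw [hX] at this
    by_contra hh; push Not at hh; nlinarith [h.h20]
  subst h3 hX
  have h6 : 0.3 ≤ θ := by by_contra hh; push Not at hh; nlinarith [h.hθ, h.hθ0]
  have h7 : 0.43 ≤ Y := by nlinarith [h.hYRs]
  have h8 := h.hθ1
  have h9 := h.h21
  by_contra hh; push Not at hh
  nlinarith [mul_pos (sub_pos.2 hh) (by linarith : 0 < (3 - θ2) * (4 + θ) - 1)]
lemma hm2 (h : Cst r Rs X θ Y θ2 m) (h3 : r = 2) : m ≤ 0.148 := by
  have h1 := h.hDpos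
  have h2 : Rs = 3 ∧ X = 4 ∧ θ2 = 1/2 := by
    rcases h.hc with h|h|h|h|h
    · exact h.2
    all_goals linarith [h.1]
  obtain ⟨ha, hb, hc⟩ := h2
  have h4 := h.hm
  subst ha hb hc
  have h6 : 0.3 ≤ θ := by by_contra hh; push Not at hh; nlinarith [h.hθ, h.hθ0]
  have h7 : 0.433 ≤ Y := by nlinarith [h.hYRs]
  have h8 := h.hθ1
  nlinarith
lemma h2b (h : Cst r Rs X θ Y θ2 m) (h3 : r = 4) : 0.2679 ≤ θ2 ∧ θ2 ≤ 0.268 := by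
  have h2 : X = 4 ∧ θ2 * (X - θ2) = 1 := by
    rcases h.hc with h|h|h|h|h
    · linarith [h.1]
    · linarith [h.1]
    · exact h.2.2
    all_goals linarith [h.1]
  obtain ⟨rfl, hb⟩ := h2
  have := h.h20
  have := h.h21
  constructor <;> (by_contra hh; push Not at hh; nlinarith)
lemma h4b (h : Cst r Rs X θ Y θ2 m) (h3 : r = 4) : Rs = 5 ∧ X = 4 := by
  rcases h.hc with h|h|h|h|h
  · linarith [h.1]
  · linarith [h.1]
  · exact ⟨h.2.1, h.2.2.1⟩
  all_goals linarith [h.1]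
lemma hm4 (h : Cst r Rs X θ Y θ2 m) (h3 : r = 4) : m ≤ 0.43 := by
  have h1 := h.hDpos
  have h2 := h.h2b h3
  obtain ⟨ha, hb⟩ := h.h4b h3
  have h4 := h.hm
  subst ha hb
  have h6 : 0.192 ≤ θ := by by_contra hh; push Not at hh; nlinarith [h.hθ, h.hθ0]
  have h7 : 0.238 ≤ Y := by nlinarith [h.hYRs]
  have h8 := h.hθ5 le_rfl
  have h9 := h.h21
  by_contra hh; push Not at hh
  nlinarith [mul_pos (sub_pos.2 hh) (by linarith : 0 < (5 - θ2) * (4 + θ) - 1)]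
end Cst


/-- Backward admissible pairs. -/
structure Bk (Rs θ θ2 t z : ℝ) : Prop where
  z0 : 0 ≤ z
  zt : z ≤ t
  t1 : t ≤ 1/2
  tz : t ≤ θ2 + z
  psi1 : (1 - θ2) * (Rs + θ - t) ≤ (1 - t + z) * (Rs + θ - θ2)

/-- Forward invariants. -/
structure Good (r Y m x y : ℝ) : Prop where
  x0 : 0 ≤ x
  x1 : x ≤ 5/8
  yY : y ≤ Y
  yx : y ≤ x * (1 + Y)
  yl : -(x * Y) ≤ y
  gm : m ≤ 1 - x - y
  s0 : ∀ t, 0 ≤ t → t ≤ 1/2 → t * (r - 1/2) ≤ 1 → m * (1 + x * t) ≤ 1 - x + y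

/-- Stronger forward invariants. -/
structure Good3 (r Rs X θ Y θ2 m x y : ℝ) : Prop where
  g : Good r Y m x y
  x2 : x ≤ 2/5
  x4 : 4 ≤ r → x ≤ 27/100
  x5 : 5 ≤ r → x * (r - 1/4) ≤ 1
  j6 : Y * x - y ≤ θ
  phi0 : ∀ t, 0 ≤ t → t ≤ 1/2 → (X + θ - 1 - Y) * (1 - x * t) ≤ (1 - x + y) * (X + θ - t)
  w1 : ∀ t z, Bk Rs θ θ2 t z → m * (1 - x * t) ≤ (1 - x - y) * (1 - t + z)

namespace Cst
variable {r Rs X θ Y θ2 m : ℝ}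

lemma bk0 (h : Cst r Rs X θ Y θ2 m) : Bk Rs θ θ2 θ2 0 :=
  ⟨le_rfl, h.h20.le, h.h21, by linarith, by linarith⟩

lemma hRs5 (h : Cst r Rs X θ Y θ2 m) (h4 : 4 ≤ r) : 5 ≤ Rs := by
  rcases h.hc with h|h|h|h|h <;> linarith [h.1, h.2.1]
lemma hRs35 (h : Cst r Rs X θ Y θ2 m) : Rs = 3 ∨ r = 4 ∨ 5 ≤ r := by
  rcases h.hc with h|h|h|h|h
  · exact Or.inl h.2.1
  · exact Or.inl h.2.1
  · exact Or.inr (Or.inl h.1)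
  · exact Or.inr (Or.inr h.1)
  · exact Or.inr (Or.inr (by linarith [h.1]))
lemma hr56 (h : Cst r Rs X θ Y θ2 m) (h5 : 5 ≤ r) : Rs = r ∨ 6 ≤ r := by
  rcases h.hc with h|h|h|h|h
  · linarith [h.1]
  · linarith [h.1]
  · linarith [h.1]
  · exact Or.inl h.2.1
  · exact Or.inr h.1
lemma hXcase (h : Cst r Rs X θ Y θ2 m) : X = Rs + 1 ∨ (X = Rs - 1 ∧ 4 ≤ r) := by
  rcases h.hc with h|h|h|h|h
  · left; linarith [h.2.1, h.2.2.1]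
  · left; linarith [h.2.1, h.2.2.1]
  · right; constructor <;> linarith [h.1, h.2.1, h.2.2.1]
  · left; linarith [h.2.1, h.2.2.1]
  · right; constructor <;> linarith [h.1, h.2.1, h.2.2.1]
lemma hr2c (h : Cst r Rs X θ Y θ2 m) (h2 : r = 2) : Rs = 3 ∧ X = 4 ∧ θ2 = 1/2 := by
  rcases h.hc with h|h|h|h|h
  · exact h.2
  all_goals linarith [h.1]
lemma hthetaCase (h : Cst r Rs X θ Y θ2 m) : r = 2 ∨ θ2 * (X - θ2) = 1 := by
  rcases h.hc with h|h|h|h|h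
  · exact Or.inl h.1
  all_goals exact Or.inr h.2.2.2

lemma m1le (h : Cst r Rs X θ Y θ2 m) :
    m * (Rs + θ - θ2) ≤ (Rs + θ - 2 - Y) * (1 - θ2) := by
  have hθ1 := h.hθ1
  have hθ0 := h.hθ0
  have hY1 := h.hY1
  have h20 := h.h20
  have h21 := h.h21
  have hm := h.hm
  have hD := h.hDpos
  have hm0 := h.hm0
  rcases h.hthetaCase with h2 | h2
  · obtain ⟨ha, hb, hc⟩ := h.hr2c h2
    subst ha hb hc
    have hm2 := h.hm2 h2
    have h6 : 0.3 ≤ θ := by by_contra hh; push Not at hh; nlinarith [h.hθ, h.hθ0]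
    nlinarith
  rcases h.hXcase with hX | ⟨hX, h4⟩
  · subst hX
    have hA : 0 < Rs + 1 - θ2 := by linarith [h.hRs3]
    have hθ2' : θ ^ 2 ≤ θ2 := by
      by_contra hh; push Not at hh
      nlinarith [h.hθ, h.hRs3]
    have key : m * (θ + θ2) ≤ 2 * (θ + θ2 - Y) := by
      have h3 := h.hmR
      have h4 : Rs * (m * (θ + θ2)) ≤ Rs * (2 * (θ + θ2 - Y)) := by
        have h5 : (m * Rs) * (θ + θ2) ≤ (Rs - 2) * (θ + θ2) := by gcongr
        nlinarith [h.hYRs, h.hθ]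
      exact le_of_mul_le_mul_left h4 (by linarith [h.hRs3])
    have : (Rs + 1 - θ2) * (m * (Rs + θ - θ2)) ≤
        (Rs + 1 - θ2) * ((Rs + θ - 2 - Y) * (1 - θ2)) := by
      have e1 : (Rs + 1 - θ2) * (m * (Rs + θ - θ2)) =
        m * ((Rs - θ2) * (Rs + 1 + θ) - 1) + m * (θ + θ2) := by
        linear_combination (-m) * h2
      have e2 : (Rs + 1 - θ2) * ((Rs + θ - 2 - Y) * (1 - θ2)) =
        (Rs + θ - 2 - Y) * (Rs - θ2) := by
        linear_combination (-(Rs + θ - 2 - Y)) * h2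
      rw [e1, e2, hm]; linarith
    exact le_of_mul_le_mul_left this hA
  · subst hX
    have hN : 0 < Rs + θ - 2 - Y := by linarith [h.hRs3]
    have h5 := h.hRs5 h4
    have : ((Rs - θ2) * (Rs - 1 + θ) - 1) * (m * (Rs + θ - θ2)) ≤
       ((Rs - θ2) * (Rs - 1 + θ) - 1) * ((Rs + θ - 2 - Y) * (1 - θ2)) := by
      have e1 : ((Rs - θ2) * (Rs - 1 + θ) - 1) * (m * (Rs + θ - θ2)) =
        (Rs + θ - 2 - Y) * ((Rs - θ2 - 2) * (Rs + θ - θ2)) := by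
        linear_combination (Rs + θ - θ2) * hm
      rw [e1]
      have e2 : (Rs - θ2 - 2) * (Rs + θ - θ2) ≤ ((Rs - θ2) * (Rs - 1 + θ) - 1) * (1 - θ2) := by
        have e3 : (Rs - θ2 - 2) = (Rs - 1 - θ2) * (1 - θ2) := by linear_combination h2
        have e4 : (Rs - 1 - θ2) * (Rs + θ - θ2) ≤ ((Rs - θ2) * (Rs - 1 + θ) - 1) := by
          nlinarith
        calc _ = (Rs - 1 - θ2) * (Rs + θ - θ2) * (1 - θ2) := by rw [e3]; ring
          _ ≤ _ := by gcongr; linarith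
      calc _ ≤ (Rs + θ - 2 - Y) * (((Rs - θ2) * (Rs - 1 + θ) - 1) * (1 - θ2)) := by gcongr
        _ = _ := by ring
    exact le_of_mul_le_mul_left this (by linarith)

lemma km (h : Cst r Rs X θ Y θ2 m) {t z : ℝ} (hb : Bk Rs θ θ2 t z) :
    m * (Rs + θ - t) ≤ (Rs + θ - 2 - Y) * (1 - t + z) := by
  have hp : 0 < Rs + θ - θ2 := by linarith [h.hRs3, h.hθ0, h.h21]
  have hN : 0 < Rs + θ - 2 - Y := by linarith [h.hRs3, h.hθ0, h.hY1]
  have ht : 0 < Rs + θ - t := by linarith [h.hRs3, h.hθ0, hb.t1]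
  have := h.m1le
  have := hb.psi1
  refine le_of_mul_le_mul_left (a := Rs + θ - θ2) ?_ hp
  calc (Rs + θ - θ2) * (m * (Rs + θ - t)) = (m * (Rs + θ - θ2)) * (Rs + θ - t) := by ring
    _ ≤ ((Rs + θ - 2 - Y) * (1 - θ2)) * (Rs + θ - t) := by gcongr
    _ = (Rs + θ - 2 - Y) * ((1 - θ2) * (Rs + θ - t)) := by ring
    _ ≤ (Rs + θ - 2 - Y) * ((1 - t + z) * (Rs + θ - θ2)) := by gcongr
    _ = _ := by ring

lemma w1_of_phi1 (h : Cst r Rs X θ Y θ2 m) {t z B w : ℝ} (hb : Bk Rs θ θ2 t z) (hB : 1 ≤ B)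
    (hP : (Rs + θ - 2 - Y) * (B - t) ≤ (B - 1 - w) * (Rs + θ - t)) :
    m * (B - t) ≤ (B - 1 - w) * (1 - t + z) := by
  have ht : 0 < Rs + θ - t := by linarith [h.hRs3, h.hθ0, hb.t1]
  have hBt : 0 < B - t := by linarith [hb.t1]
  have hz : 0 < 1 - t + z := by linarith [hb.t1, hb.z0]
  have := h.km hb
  refine le_of_mul_le_mul_left (a := Rs + θ - t) ?_ ht
  calc (Rs + θ - t) * (m * (B - t)) = (m * (Rs + θ - t)) * (B - t) := by ring
    _ ≤ ((Rs + θ - 2 - Y) * (1 - t + z)) * (B - t) := by gcongr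
    _ = ((Rs + θ - 2 - Y) * (B - t)) * (1 - t + z) := by ring
    _ ≤ ((B - 1 - w) * (Rs + θ - t)) * (1 - t + z) := by gcongr
    _ = _ := by ring

/-- Assemble `Good3` for the new state. -/
lemma mk3 (h : Cst r Rs X θ Y θ2 m) {x' y' B w : ℝ} (hx : x' * B = 1) (hy : y' = x' * w)
    (hB : 5/2 ≤ B) (hB4 : 4 ≤ r → 3.73 ≤ B) (hB5 : 5 ≤ r → r - 1/4 ≤ B)
    (w1 : w ≤ Y * B) (w2 : w ≤ 1 + Y) (w3 : -Y ≤ w) (j6 : Y - w ≤ θ * B)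
    (phi0 : ∀ t, 0 ≤ t → t ≤ 1/2 → (X + θ - 1 - Y) * (B - t) ≤ (B - 1 + w) * (X + θ - t))
    (W1 : ∀ t z, Bk Rs θ θ2 t z → m * (B - t) ≤ (B - 1 - w) * (1 - t + z)) :
    Good3 r Rs X θ Y θ2 m x' y' := by
  have hx0 : 0 < x' := by
    by_contra hh; push Not at hh; nlinarith
  have E1 : 1 - x' + y' = x' * (B - 1 + w) := by rw [hy]; linear_combination -hx
  have E2 : ∀ t, 1 - x' * t = x' * (B - t) := fun t => by linear_combination -hx
  have E3 : 1 - x' - y' = x' * (B - 1 - w) := by rw [hy]; linear_combination -hx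
  have hx2 : x' ≤ 2/5 := by nlinarith
  have hx4 : 4 ≤ r → x' ≤ 27/100 := fun h4 => by nlinarith [hB4 h4]
  have hx5 : 5 ≤ r → x' * (r - 1/4) ≤ 1 := fun h5 => by nlinarith [hB5 h5]
  have hyl : -(x' * Y) ≤ y' := by rw [hy]; nlinarith
  have hW : ∀ t z, Bk Rs θ θ2 t z → m * (1 - x' * t) ≤ (1 - x' - y') * (1 - t + z) := by
    intro t z hb
    rw [E2, E3]
    have := mul_le_mul_of_nonneg_left (W1 t z hb) hx0.le
    linarith
  refine ⟨⟨hx0.le, by linarith, ?_, ?_, hyl, ?_, ?_⟩, hx2, hx4, hx5, ?_, ?_, hW⟩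
  · rw [hy]; nlinarith
  · rw [hy]; exact mul_le_mul_of_nonneg_left w2 hx0.le
  · have h1 := hW θ2 0 h.bk0
    have h2 : m * (1 - θ2) ≤ m * (1 - x' * θ2) := by
      apply mul_le_mul_of_nonneg_left _ h.hm0.le
      nlinarith [h.h20]
    have h3 : (1 - θ2) * m ≤ (1 - θ2) * (1 - x' - y') := by linarith
    exact le_of_mul_le_mul_left h3 (by linarith [h.h21])
  · intro t ht0 ht1 htr
    have hY1 := h.hY1
    have hY0 := h.hY0
    have hm0 := h.hm0
    have hxt : 0 ≤ x' * t := by positivity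
    suffices m * (1 + x' * t) ≤ 1 - x' - x' * Y by linarith
    have hxY : x' * Y ≤ x' * 0.4344 := by gcongr
    rcases h.hRs35 with h3 | h4 | h5
    · have := h.hm3 h3
      have a1 : x' * t ≤ 2/5 * (1/2) := by gcongr
      have a2 : m * (1 + x' * t) ≤ 0.2 * (1 + 2/5 * (1/2)) := by gcongr
      linarith
    · have := h.hm4 h4
      have := hx4 (by linarith)
      have a1 : x' * t ≤ 27/100 * (1/2) := by gcongr
      have a2 : m * (1 + x' * t) ≤ 0.43 * (1 + 27/100 * (1/2)) := by gcongr
      linarith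
    · have hR := h.hRs3
      have hm := h.hmR
      have h6 := hx5 h5
      have h7 := h.hRsr
      have h8 := h.hY5 (h.hRs5 (by linarith))
      have ht : t ≤ 0.2223 := by nlinarith
      have h9 := h.hm1
      have a1 : x' * Y ≤ x' * 0.2386 := by gcongr
      have a2 : m * (x' * t) ≤ 1 * (x' * 0.2223) := by gcongr
      have a3 : x' * Rs ≤ x' * (r + 1) := by gcongr
      have hc : 1.4609 * (x' * Rs) ≤ 2 := by
        rcases h.hr56 h5 with h' | h' 
        · rw [h']; nlinarith
        · nlinarith
      suffices Rs * (m * (1 + x' * t)) ≤ Rs * (1 - x' - x' * Y) from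
        le_of_mul_le_mul_left this (by linarith)
      have b1 : Rs * (x' * Y + m * (x' * t)) ≤ Rs * (x' * 0.2386 + 1 * (x' * 0.2223)) := by
        apply mul_le_mul_of_nonneg_left <;> linarith
      nlinarith
  · rw [hy]; nlinarith
  · intro t ht0 ht1
    rw [E2, E1]
    have := mul_le_mul_of_nonneg_left (phi0 t ht0 ht1) hx0.le
    linarith

set_option maxHeartbeats 1600000 in
lemma stepEP (h : Cst r Rs X θ Y θ2 m) {x y x' y' a : ℝ} (hg : Good r Y m x y) (ha : X ≤ a)
    (hx : x' * (a + x) = 1) (hy : y' = x' * (-y)) : Good3 r Rs X θ Y θ2 m x' y' := by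
  have hX4 := h.hX4
  have hθ1 := h.hθ1
  have hθ0 := h.hθ0
  have hY1 := h.hY1
  have hY0 := h.hY0
  have hY := h.hY
  have hrX := h.hrX
  have hRs3 := h.hRs3
  obtain ⟨gx0, gx1, gyY, gyx, gyl, ggm, gs0⟩ := hg
  have hyl' : -Y ≤ y := by nlinarith
  have hyx : x < θ → (1 + Y) * (θ - x) ≤ Y - y := fun hh => by nlinarith
  refine h.mk3 hx hy (by linarith) (by intro; linarith) (by intro; linarith) ?_ (by linarith)
    (by linarith) ?_ ?_ ?_
  · nlinarith
  · have : θ * 4 ≤ θ * (a + x) := by gcongr; linarith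
    nlinarith
  · intro t ht0 ht1
    suffices 0 ≤ (a + x - X - θ) * (1 + Y - t) + (Y - y) * (X + θ - t) by linarith
    have p1 : (x - θ) * (1 + Y - t) ≤ (a + x - X - θ) * (1 + Y - t) := by
      apply mul_le_mul_of_nonneg_right <;> linarith
    rcases le_or_gt θ x with hh | hh
    · have : 0 ≤ (x - θ) * (1 + Y - t) := mul_nonneg (by linarith) (by linarith)
      have : 0 ≤ (Y - y) * (X + θ - t) := mul_nonneg (by linarith) (by linarith)
      linarith
    · have p2 : ((1 + Y) * (θ - x)) * (X + θ - t) ≤ (Y - y) * (X + θ - t) := by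
        apply mul_le_mul_of_nonneg_right (hyx hh); linarith
      have p3 : 0 ≤ (θ - x) * ((1 + Y) * (X + θ - t) - (1 + Y - t)) :=
        mul_nonneg (by linarith) (by nlinarith)
      linarith
  · intro t z hb
    apply h.w1_of_phi1 hb (by linarith)
    have ht1 := hb.t1
    have hRsX := h.hRsX
    suffices 0 ≤ (a + x - Rs - θ) * (2 + Y - t) + (1 + Y + y) * (Rs + θ - t) by linarith
    have p1 : (-(1 + θ - x)) * (2 + Y - t) ≤ (a + x - Rs - θ) * (2 + Y - t) := by
      apply mul_le_mul_of_nonneg_right <;> linarith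
    have p2 : (1 + θ - x) * (Rs + θ - t) ≤ (1 + Y + y) * (Rs + θ - t) := by
      apply mul_le_mul_of_nonneg_right _ (by linarith)
      nlinarith [h.hθY]
    have p3 : 0 ≤ (1 + θ - x) * (Rs + θ - 2 - Y) := mul_nonneg (by linarith) (by linarith)
    linarith

set_option maxHeartbeats 1600000 in
lemma stepEM (h : Cst r Rs X θ Y θ2 m) {x y x' y' a : ℝ} (hg : Good3 r Rs X θ Y θ2 m x y)
    (ha : X ≤ a) (hx : x' * (a - x) = 1) (hy : y' = x' * y) :
    Good3 r Rs X θ Y θ2 m x' y' := by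
  have hX4 := h.hX4
  have hθ1 := h.hθ1
  have hθ0 := h.hθ0
  have hY1 := h.hY1
  have hY0 := h.hY0
  have hY := h.hY
  have hrX := h.hrX
  have hRs3 := h.hRs3
  have hYB := h.hYB
  obtain ⟨⟨gx0, gx1, gyY, gyx, gyl, ggm, gs0⟩, gx2, gx4, gx5, gj6, gphi, gw⟩ := hg
  have hyl' : -Y ≤ y := by nlinarith
  refine h.mk3 hx hy (by linarith) (by intro h4; linarith [gx4 h4])
    (by intro h5; nlinarith [gx5 h5]) ?_ (by linarith)
    (by linarith) ?_ ?_ ?_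
  · nlinarith
  · have : θ * 3.6 ≤ θ * (a - x) := by gcongr; linarith
    nlinarith
  · intro t ht0 ht1
    suffices 0 ≤ (a - x - X - θ) * (1 + Y - t) + (Y + y) * (X + θ - t) by linarith
    have p1 : (-(x + θ)) * (1 + Y - t) ≤ (a - x - X - θ) * (1 + Y - t) := by
      apply mul_le_mul_of_nonneg_right <;> linarith
    rcases h.hXcase with hX | ⟨hX, h4⟩
    · have p2 : (Y * (x + θ)) * (X + θ - t) ≤ (Y + y) * (X + θ - t) := by
        apply mul_le_mul_of_nonneg_right _ (by linarith); linarith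
      have p3 : 0 ≤ (x + θ) * (Y * (X + θ - t) - (1 + Y - t)) := by
        apply mul_nonneg (by linarith)
        rw [hX]; nlinarith
      linarith
    · have hθ5 := h.hθ5 (h.hRs5 h4)
      have hY5 := h.hY5 (h.hRs5 h4)
      have hx4 := gx4 h4
      have hB : Y * (X + θ) = 1 := by rw [hX]; linarith
      have p2 : (Y * (1 - x)) * (X + θ - t) ≤ (Y + y) * (X + θ - t) := by
        apply mul_le_mul_of_nonneg_right _ (by linarith); linarith
      have p3 : (Y * (1 - x)) * (X + θ - t) = (1 - x) * (1 - Y * t) := by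
        linear_combination (1 - x) * hB
      have p4 : 0.73 * 0.88 ≤ (1 - x) * (1 - Y * t) := by
        apply mul_le_mul <;> nlinarith
      have p5 : (x + θ) * (1 + Y - t) ≤ 0.4627 * 1.2386 := by
        apply mul_le_mul <;> linarith
      linarith
  · intro t z hb
    apply h.w1_of_phi1 hb (by linarith)
    have ht1 := hb.t1
    have ht0 : 0 ≤ t := hb.z0.trans hb.zt
    suffices 0 ≤ (a - x - Rs - θ) * (2 + Y - t) + (1 + Y - y) * (Rs + θ - t) by linarith
    have p2 : 1 * (Rs + θ - t) ≤ (1 + Y - y) * (Rs + θ - t) := by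
      apply mul_le_mul_of_nonneg_right _ (by linarith); linarith
    rcases h.hXcase with hX | ⟨hX, h4⟩
    · have : 0 ≤ (a - x - Rs - θ) * (2 + Y - t) := mul_nonneg (by linarith) (by linarith)
      linarith
    · have hθ5 := h.hθ5 (h.hRs5 h4)
      have hY5 := h.hY5 (h.hRs5 h4)
      have hR5 := h.hRs5 h4
      have hx4 := gx4 h4
      have p1 : (-(1 + x + θ)) * (2 + Y - t) ≤ (a - x - Rs - θ) * (2 + Y - t) := by
        apply mul_le_mul_of_nonneg_right <;> linarith
      have p3 : (1 + x + θ) * (2 + Y - t) ≤ 1.4627 * 2.2386 := by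
        apply mul_le_mul <;> linarith
      linarith

set_option maxHeartbeats 1600000 in
lemma stepOP (h : Cst r Rs X θ Y θ2 m) {x y x' y' a : ℝ} (hg : Good r Y m x y) (ha : Rs ≤ a)
    (hx : x' * (a + x) = 1) (hy : y' = x' * (1 + y)) : Good3 r Rs X θ Y θ2 m x' y' := by
  have hX4 := h.hX4
  have hθ1 := h.hθ1
  have hθ0 := h.hθ0
  have hY1 := h.hY1
  have hY0 := h.hY0
  have hY := h.hY
  have hrRs := h.hrRs
  have hRs3 := h.hRs3
  have hYRs := h.hYRs
  obtain ⟨gx0, gx1, gyY, gyx, gyl, ggm, gs0⟩ := hg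
  have hyl' : -Y ≤ y := by nlinarith
  have hyx : x < θ → (1 + Y) * (θ - x) ≤ Y - y := fun hh => by nlinarith
  refine h.mk3 hx hy (by linarith) (by intro h4; linarith [h.hRs5 h4]) (by intro; linarith) ?_
    (by linarith) (by linarith) ?_ ?_ ?_
  · have e : y ≤ θ + Y * x := by
      have e1 := mul_le_mul_of_nonneg_left gyx hθ0.le
      have e2 := mul_le_mul_of_nonneg_left gyY (by linarith : 0 ≤ 1 - θ)
      have e3 : θ * (x * (1 + Y)) = Y * x := by linear_combination (-x) * hY
      linarith
    have : Y * (Rs + x) ≤ Y * (a + x) := by gcongr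
    linarith
  · have : 0 ≤ θ * (a + x) := by apply mul_nonneg <;> linarith
    nlinarith
  · intro t ht0 ht1
    have hXRs := h.hXRs
    suffices 0 ≤ (a + x - X - θ) * (1 + Y - t) + (1 + Y + y) * (X + θ - t) by linarith
    have p1 : (-(1 + θ - x)) * (1 + Y - t) ≤ (a + x - X - θ) * (1 + Y - t) := by
      apply mul_le_mul_of_nonneg_right <;> linarith
    have p2 : (1 + θ - x) * (X + θ - t) ≤ (1 + Y + y) * (X + θ - t) := by
      apply mul_le_mul_of_nonneg_right _ (by linarith)
      nlinarith [h.hθY]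
    have p3 : 0 ≤ (1 + θ - x) * (X + θ - 1 - Y) := mul_nonneg (by linarith) (by linarith)
    linarith
  · intro t z hb
    apply h.w1_of_phi1 hb (by linarith)
    have ht1 := hb.t1
    have ht0 : 0 ≤ t := hb.z0.trans hb.zt
    suffices 0 ≤ (a + x - Rs - θ) * (2 + Y - t) + (Y - y) * (Rs + θ - t) by linarith
    have p1 : (x - θ) * (2 + Y - t) ≤ (a + x - Rs - θ) * (2 + Y - t) := by
      apply mul_le_mul_of_nonneg_right <;> linarith
    rcases le_or_gt θ x with hh | hh
    · have : 0 ≤ (x - θ) * (2 + Y - t) := mul_nonneg (by linarith) (by linarith)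
      have : 0 ≤ (Y - y) * (Rs + θ - t) := mul_nonneg (by linarith) (by linarith)
      linarith
    · have p2 : ((1 + Y) * (θ - x)) * (Rs + θ - t) ≤ (Y - y) * (Rs + θ - t) := by
        apply mul_le_mul_of_nonneg_right (hyx hh); linarith
      have p3 : 0 ≤ (θ - x) * ((1 + Y) * (Rs + θ - t) - (2 + Y - t)) :=
        mul_nonneg (by linarith) (by nlinarith)
      linarith

set_option maxHeartbeats 1600000 in
lemma stepOM (h : Cst r Rs X θ Y θ2 m) {x y x' y' a : ℝ} (hg : Good3 r Rs X θ Y θ2 m x y)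
    (ha : a = Rs ∨ Rs + 2 ≤ a) (hx : x' * (a - x) = 1) (hy : y' = x' * (1 - y)) :
    Good3 r Rs X θ Y θ2 m x' y' := by
  have hX4 := h.hX4
  have hθ1 := h.hθ1
  have hθ0 := h.hθ0
  have hY1 := h.hY1
  have hY0 := h.hY0
  have hY := h.hY
  have hrRs := h.hrRs
  have hRs3 := h.hRs3
  have hYRs := h.hYRs
  have hYB := h.hYB
  have hm0 := h.hm0
  have h20 := h.h20
  have h21 := h.h21
  obtain ⟨⟨gx0, gx1, gyY, gyx, gyl, ggm, gs0⟩, gx2, gx4, gx5, gj6, gphi, gw⟩ := hg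
  have hyl' : -Y ≤ y := by nlinarith only [gyl, gx1, gx0, hY0]
  have ha' : Rs ≤ a := by rcases ha with ha | ha <;> linarith
  refine h.mk3 hx hy (by linarith) (by intro h4; linarith [h.hRs5 h4])
    (by intro h5; nlinarith only [gx5 h5, h5, gx0, hrRs, ha']) ?_ (by linarith) (by linarith) ?_ ?_ ?_
  · have : Y * (Rs - x) ≤ Y * (a - x) := by gcongr
    linarith
  · have : 0 ≤ θ * (a - x) := by apply mul_nonneg <;> linarith
    linarith
  · intro t ht0 ht1
    have hXRs := h.hXRs
    suffices 0 ≤ (a - x - X - θ) * (1 + Y - t) + (1 + Y - y) * (X + θ - t) by linarith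
    have p1 : (-(1 + x + θ)) * (1 + Y - t) ≤ (a - x - X - θ) * (1 + Y - t) := by
      apply mul_le_mul_of_nonneg_right <;> linarith
    have p2 : 1 * (X + θ - t) ≤ (1 + Y - y) * (X + θ - t) := by
      apply mul_le_mul_of_nonneg_right _ (by linarith); linarith
    have p3 : (1 + x + θ) * (1 + Y - t) ≤ 1.703 * 1.4344 := by
      apply mul_le_mul <;> linarith
    linarith
  · intro t z hb
    have ht1 := hb.t1
    have ht0 : 0 ≤ t := hb.z0.trans hb.zt
    have hz0 := hb.z0
    rcases ha with rfl | ha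
    · rcases h.hRs35 with h3 | h4 | h5
      · subst h3
        have htz := hb.tz
        have hp := gphi (1 / (3 - t)) (by apply div_nonneg <;> linarith)
          (by rw [div_le_iff₀] <;> linarith)
        have ht3 : 0 < 3 - t := by linarith
        have hq : 1 / (3 - t) * (3 - t) = 1 := by field_simp
        have hp2 : (X + θ - 1 - Y) * (3 - t - x) ≤ (1 - x + y) * ((X + θ) * (3 - t) - 1) := by
          have := mul_le_mul_of_nonneg_right hp ht3.le
          have e1 : (X + θ - 1 - Y) * (1 - x * (1 / (3 - t))) * (3 - t) =
            (X + θ - 1 - Y) * (3 - t - x) := by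
            linear_combination (-(X + θ - 1 - Y)) * x * hq
          have e2 : (1 - x + y) * (X + θ - 1 / (3 - t)) * (3 - t) =
            (1 - x + y) * ((X + θ) * (3 - t) - 1) := by
            linear_combination (-(1 - x + y)) * hq
          linarith
        have hD := h.hDpos
        have hm := h.hm
        have hk : m * ((X + θ) * (3 - t) - 1) ≤ (X + θ - 1 - Y) * (1 - t + z) := by
          refine le_of_mul_le_mul_left (a := (3 - θ2) * (X + θ) - 1) ?_ (by linarith)
          have e1 : ((3 - θ2) * (X + θ) - 1) * (m * ((X + θ) * (3 - t) - 1)) =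
            (X + θ - 1 - Y) * ((3 - θ2 - 2) * ((X + θ) * (3 - t) - 1)) := by
            linear_combination ((X + θ) * (3 - t) - 1) * hm
          rw [e1]
          have e2 : (3 - θ2 - 2) * ((X + θ) * (3 - t) - 1) ≤
             (1 - t + z) * ((3 - θ2) * (X + θ) - 1) := by
            have q1 : 0 ≤ (θ2 + z - t) * (2 * (X + θ) - 1) := mul_nonneg (by linarith) (by linarith)
            have q2 : 0 ≤ z * ((1 - θ2) * (X + θ)) := by
              apply mul_nonneg hz0; apply mul_nonneg <;> linarith
            linarith
          have := mul_le_mul_of_nonneg_left e2 (by linarith : 0 ≤ X + θ - 1 - Y)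
          linarith
        have hpp : 0 < (X + θ) * (3 - t) - 1 := by nlinarith only [hX4, hθ0, ht1]
        refine le_of_mul_le_mul_left (a := (X + θ) * (3 - t) - 1) ?_ hpp
        have q1 := mul_le_mul_of_nonneg_right hp2 (by linarith : 0 ≤ 1 - t + z)
        have q2 := mul_le_mul_of_nonneg_right hk (by linarith : 0 ≤ 3 - t - x)
        linarith
      · have hm4 := h.hm4 h4
        obtain ⟨hR, hX⟩ := h.h4b h4
        obtain ⟨b1, b2⟩ := h.h2b h4
        have hx4 := gx4 (by linarith)
        have hθ5 := h.hθ5 (by linarith)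
        have hY5 := h.hY5 (by linarith)
        have hps := hb.psi1
        subst hR
        have h6 : 0.192 ≤ θ := by by_contra hh; push Not at hh; nlinarith only [h.hθ, h.hθ0, hh]
        have k1 : 0.1486 * (5.192 - t) ≤ 1 - t + z := by
          have : 0.732 * (5.192 - t) ≤ (1 - θ2) * (5 + θ - t) := by
            apply mul_le_mul <;> linarith
          have : (1 - t + z) * (5 + θ - θ2) ≤ (1 - t + z) * 4.9249 := by
            apply mul_le_mul_of_nonneg_left <;> linarith
          linarith
        have k2 : 3 - 1.2386 * x ≤ 3 - x + y := by nlinarith only [gyl, gx0, hY5]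
        have k3 : (3 - 1.2386 * x) * (0.1486 * (5.192 - t)) ≤ (3 - x + y) * (1 - t + z) := by
          apply mul_le_mul k2 k1 <;> linarith
        have k4 : m * (5 - x - t) ≤ 0.43 * (5 - x - t) := by
          apply mul_le_mul_of_nonneg_right <;> linarith
        have k5 : 0.43 * (5 - x - t) ≤ (3 - 1.2386 * x) * (0.1486 * (5.192 - t)) := by
          nlinarith only [mul_nonneg (sub_nonneg.2 hx4) ht0, hx4, ht0, ht1, gx0]
        linarith
      · apply h.w1_of_phi1 hb (by linarith)
        suffices 0 ≤ (-(x + θ)) * (2 + Y - t) + (Y + y) * (a + θ - t) by linarith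
        have hR5 := h.hRs5 (by linarith)
        have hθ5 := h.hθ5 hR5
        have hY5 := h.hY5 hR5
        have hx5 := gx5 h5
        have p2 : (Y * (1 - x)) * (a + θ - t) ≤ (Y + y) * (a + θ - t) := by
          apply mul_le_mul_of_nonneg_right _ (by linarith); linarith
        have p3 : (Y * (1 - x)) * (a + θ - t) = (1 - x) * (1 + Y - Y * t) := by
          linear_combination (1 - x) * hYB
        have hYt : Y * t ≤ Y * (1/2) := by gcongr
        rcases le_or_gt a 6 with h6 | h6
        · have hxx : x ≤ 0.2106 := by nlinarith only [hx5, h5, gx0]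
          have hY6 : 1/6 ≤ Y := by nlinarith only [hYRs, h6, hY0, hθ0]
          have p4 : (x + θ) * (2 + Y - t) ≤ 0.4033 * (2.2386 - t) := by
            apply mul_le_mul <;> linarith
          have p5 : 0.7894 * (1.1666 - t / 6) ≤ (1 - x) * (1 + Y - Y * t) := by
            apply mul_le_mul
            · linarith
            · have := mul_le_mul_of_nonneg_right hY6 (by linarith : 0 ≤ 1 - t)
              linarith
            · linarith
            · linarith
          linarith
        · have hr : 6 ≤ r := by rcases h.hr56 h5 with h' | h' <;> linarith
          have hxx : x ≤ 0.174 := by nlinarith only [hx5, hr, gx0]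
          have hθ6 : θ ≤ 1/6 := by nlinarith only [h.hθRs, h6, hθ0]
          have p4 : (x + θ) * (2 + Y - t) ≤ 0.341 * 2.2386 := by
            apply mul_le_mul <;> linarith
          have p5 : 0.826 * 1 ≤ (1 - x) * (1 + Y - Y * t) := by
            apply mul_le_mul <;> linarith
          linarith
    · apply h.w1_of_phi1 hb (by linarith)
      suffices 0 ≤ (a - x - Rs - θ) * (2 + Y - t) + (Y + y) * (Rs + θ - t) by linarith
      have : 0 ≤ (a - x - Rs - θ) * (2 + Y - t) := mul_nonneg (by linarith) (by linarith)
      have : 0 ≤ (Y + y) * (Rs + θ - t) := mul_nonneg (by linarith) (by linarith)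
      linarith

lemma step2P (h : Cst r Rs X θ Y θ2 m) (h2 : r = 2) {x y x' y' : ℝ} (hg : Good r Y m x y)
    (hx : x' * (2 + x) = 1) (hy : y' = x' * (-y)) : Good r Y m x' y' := by
  have hm2 := h.hm2 h2
  have hm0 := h.hm0
  have hY1 := h.hY1
  have hY0 := h.hY0
  obtain ⟨gx0, gx1, gyY, gyx, gyl, ggm, gs0⟩ := hg
  have hyl' : -Y ≤ y := by nlinarith
  have hx0 : 0 < x' := by
    by_contra hh; push Not at hh; nlinarith
  have hx1 : x' ≤ 1/2 := by nlinarith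
  refine ⟨hx0.le, by linarith, ?_, ?_, ?_, ?_, ?_⟩
  · rw [hy]; nlinarith
  · rw [hy]; nlinarith
  · rw [hy]; nlinarith
  · have e : 1 - x' - y' = x' * (1 + x + y) := by rw [hy]; linear_combination -hx
    have e2 : m = x' * (m * (2 + x)) := by linear_combination (-m) * hx
    rw [e, e2]
    apply mul_le_mul_of_nonneg_left _ hx0.le
    nlinarith
  · intro t ht0 ht1 _
    have e : 1 - x' + y' = x' * (1 + x - y) := by rw [hy]; linear_combination -hx
    have e2 : m * (1 + x' * t) = x' * (m * (2 + x + t)) := by linear_combination (-m) * hx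
    rw [e, e2]
    apply mul_le_mul_of_nonneg_left _ hx0.le
    have : m * (2 + x + t) ≤ 0.148 * (2 + x + t) := by
      apply mul_le_mul_of_nonneg_right <;> linarith
    linarith

lemma step2M (h : Cst r Rs X θ Y θ2 m) (h2 : r = 2) {x y x' y' : ℝ}
    (hg : Good3 r Rs X θ Y θ2 m x y)
    (hx : x' * (2 - x) = 1) (hy : y' = x' * y) : Good r Y m x' y' := by
  have hm2 := h.hm2 h2
  have hm0 := h.hm0
  have hY1 := h.hY1
  have hY0 := h.hY0
  obtain ⟨-, -, hθ2⟩ := h.hr2c h2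
  have hb := h.bk0
  obtain ⟨⟨gx0, gx1, gyY, gyx, gyl, ggm, gs0⟩, gx2, gx4, gx5, gj6, gphi, gw⟩ := hg
  have hyl' : -Y ≤ y := by nlinarith
  have hx0 : 0 < x' := by
    by_contra hh; push Not at hh; nlinarith
  have hx1 : x' ≤ 5/8 := by nlinarith
  refine ⟨hx0.le, by linarith, ?_, ?_, ?_, ?_, ?_⟩
  · rw [hy]; nlinarith
  · rw [hy]; nlinarith
  · rw [hy]; nlinarith
  · have e : 1 - x' - y' = x' * (1 - x - y) := by rw [hy]; linear_combination -hx
    have e2 : m = x' * (m * (2 - x)) := by linear_combination (-m) * hx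
    rw [e, e2]
    apply mul_le_mul_of_nonneg_left _ hx0.le
    have := gw θ2 0 hb
    rw [hθ2] at this
    linarith
  · intro t ht0 ht1 _
    have e : 1 - x' + y' = x' * (1 - x + y) := by rw [hy]; linear_combination -hx
    have e2 : m * (1 + x' * t) = x' * (m * (2 - x + t)) := by linear_combination (-m) * hx
    rw [e, e2]
    apply mul_le_mul_of_nonneg_left _ hx0.le
    have : m * (2 - x + t) ≤ 0.148 * (2 - x + t) := by
      apply mul_le_mul_of_nonneg_right <;> linarith
    nlinarith

lemma good0 (h : Cst r Rs X θ Y θ2 m) : Good3 r Rs X θ Y θ2 m 0 0 := by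
  have hX4 := h.hX4
  have hθ0 := h.hθ0
  have hY0 := h.hY0
  have hY1 := h.hY1
  have hm1 := h.hm1
  have hm0 := h.hm0
  refine ⟨⟨le_rfl, by norm_num, hY0.le, by linarith, by linarith, by linarith, ?_⟩, by norm_num,
    by norm_num, by norm_num, by linarith, ?_, ?_⟩
  · intro t _ _ _; linarith
  · intro t _ _; linarith
  · intro t z hb
    have := h.km hb
    have ht := hb.t1
    have hR := h.hRs3
    have hz : 0 ≤ 1 - t + z := by linarith [hb.z0]
    have h2 : (Rs + θ - 2 - Y) * (1 - t + z) ≤ (Rs + θ - t) * (1 - t + z) := by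
      apply mul_le_mul_of_nonneg_right _ hz; linarith
    have : (Rs + θ - t) * m ≤ (Rs + θ - t) * (1 - t + z) := by linarith
    have := le_of_mul_le_mul_left this (by linarith)
    linarith
end Cst


namespace Cst
variable {r Rs X θ Y θ2 m : ℝ}

/-- An `A1` inverse to `θ2`. -/
lemma exA1 (h : Cst r Rs X θ Y θ2 m) : ∃ A1 : ℝ, A1 * θ2 = 1 ∧ 2 ≤ A1 ∧
    ((r = 2 ∧ A1 = 2) ∨ (A1 = X - θ2 ∧ r ≠ 2)) := by
  by_cases h2 : r = 2
  · obtain ⟨-, -, h3⟩ := h.hr2c h2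
    exact ⟨2, by rw [h3]; norm_num, le_rfl, Or.inl ⟨h2, rfl⟩⟩
  · rcases h.hthetaCase with h3 | h3
    · exact absurd h3 h2
    · exact ⟨X - θ2, by linarith, by linarith [h.hX4, h.h21], Or.inr ⟨rfl, h2⟩⟩

lemma hr3 (h : Cst r Rs X θ Y θ2 m) (h2 : r ≠ 2) : 3 ≤ r := by
  rcases h.hc with h|h|h|h|h
  · exact absurd h.1 h2
  all_goals linarith [h.1]
lemma hXr (h : Cst r Rs X θ Y θ2 m) (h2 : r ≠ 2) : X ≤ r + 1 := by
  rcases h.hc with h|h|h|h|h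
  · exact absurd h.1 h2
  all_goals linarith [h.1, h.2.2.1]

/-- One step of the deviation estimate. -/
lemma tz_step (h : Cst r Rs X θ Y θ2 m) (h2 : r ≠ 2) {t z t' z' b e η : ℝ} {od : Prop}
    (he : e = 1 ∨ e = -1) (ht0 : 0 < t) (ht1 : t ≤ 1/2) (ht : t * (b + e * t') = 1)
    (ht0' : 0 < t') (htr : t * (r - 1/2) ≤ 1) (htr' : t' * (r - 1/2) ≤ 1)
    (hz0' : 0 ≤ z') (hzt' : z' ≤ t') (hη : 0 ≤ η)
    (ho : (od ∧ z = t * (1 - z')) ∨ (¬ od ∧ z = t * z' ∧ X ≤ b))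
    (hd : t' - z' - θ2 ≤ η) : t - z - θ2 ≤ η / 2 := by
  have hr3 := h.hr3 h2
  have hXr := h.hXr h2
  have h20 := h.h20
  have h21 := h.h21
  have hX4 := h.hX4
  have h3 : θ2 * (X - θ2) = 1 := by
    rcases h.hthetaCase with h3 | h3
    · exact absurd h3 h2
    · exact h3
  have hθX : 1 ≤ θ2 * X := by nlinarith only [h3, sq_nonneg θ2]
  rcases ho with ⟨_, hz⟩ | ⟨_, hz, hb⟩
  · have a1 : t - z = t * z' := by rw [hz]; ring
    have a2 : t * z' ≤ t * t' := by gcongr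
    have a3 : t * t' ≤ θ2 := by
      by_contra hh; push Not at hh
      have b1 : t ≤ 0.4 := by nlinarith only [htr, hr3, ht0]
      have b2 : t * t' * (r - 1/2) ≤ t := by nlinarith only [mul_le_mul_of_nonneg_left htr' ht0.le]
      have b3 : θ2 * X ≤ θ2 * (r + 1) := by gcongr
      have b4 : θ2 * (r + 1) ≤ t * t' * (r + 1) := by gcongr
      have b5 : t * t' ≤ 0.16 := by
        have : t' ≤ 0.4 := by nlinarith only [htr', hr3, ht0']
        nlinarith only [this, b1, ht0, ht0']
      linarith
    linarith
  · rcases he with he | he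
    · subst he
      have : t ≤ θ2 := by
        have c1 : t * X ≤ t * b := by gcongr
        have c2 : 0 < t * t' := by positivity
        have : t * X ≤ θ2 * X := by linarith
        exact le_of_mul_le_mul_right this (by linarith)
      have : 0 ≤ z := by rw [hz]; positivity
      linarith
    · subst he
      have c1 : t * X ≤ t * b := by gcongr
      have c2 : (t - θ2) * (X - θ2) ≤ t * (t' - θ2) := by linarith
      have c3 := mul_le_mul_of_nonneg_left c2 h20.le
      have c4 : θ2 * ((t - θ2) * (X - θ2)) = t - θ2 := by linear_combination (t - θ2) * h3
      have c5 : t * (θ2 * z') ≤ t * (1 * z') := by gcongr; linarith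
      have c6 : (θ2 * t) * (t' - z' - θ2) ≤ (θ2 * t) * η := by gcongr
      have c7 : (θ2 * t) * η ≤ (1/2 * 1) * η := by gcongr; linarith
      rw [hz]; linarith

/-- `Ψ1` at one level from the next. -/
lemma psi1_step (h : Cst r Rs X θ Y θ2 m) {t z t' z' b e w : ℝ}
    (he : e = 1 ∨ e = -1) (ht0 : 0 < t) (ht1 : t ≤ 1/2) (ht : t * (b + e * t') = 1)
    (ht0' : 0 < t') (ht1' : t' ≤ 1/2) (hz0' : 0 ≤ z') (hzt' : z' ≤ t')
    (htz' : t' ≤ θ2 + z') (hz : z = t * w)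
    (ho : (w = 1 - z' ∧ Rs ≤ b) ∨ (w = z' ∧ (X ≤ b ∨ r = 2))) :
    (1 - θ2) * (Rs + θ - t) ≤ (1 - t + z) * (Rs + θ - θ2) := by
  obtain ⟨A1, hA1, hA2, hA3⟩ := h.exA1
  have hX4 := h.hX4
  have hRs3 := h.hRs3
  have hθ0 := h.hθ0
  have h20 := h.h20
  have h21 := h.h21
  have hXRs := h.hXRs
  have hA : 2 ≤ b + e * t' := by
    by_contra hh; push Not at hh; nlinarith only [hh, ht0, ht1, ht]
  have hAb : b - t' ≤ b + e * t' := by rcases he with rfl | rfl <;> linarith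
  have hw0 : 0 ≤ w := by rcases ho with ⟨h1, _⟩ | ⟨h1, _⟩ <;> linarith
  set A := b + e * t' with hAdef
  set B := Rs + θ with hBdef
  have hB3 : 3 ≤ B := by linarith
  have hAB : 2 * B - 1 ≤ A1 * B - 1 := by nlinarith only [hA2, hB3]
  have key : 0 ≤ (A - A1) * (B - 1) + w * (A1 * B - 1) := by
    rcases hA3 with ⟨hr, hA3⟩ | ⟨hA3, hr⟩
    · have : 0 ≤ (A - A1) * (B - 1) := mul_nonneg (by linarith) (by linarith)
      have : 0 ≤ w * (A1 * B - 1) := mul_nonneg hw0 (by linarith)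
      linarith
    · rcases ho with ⟨hw, hb⟩ | ⟨hw, hb⟩
      · have q1 : (-(1 + z')) * (B - 1) ≤ (A - A1) * (B - 1) := by
          apply mul_le_mul_of_nonneg_right <;> linarith
        have q2 : (1 - z') * (3.5 * (B - 1)) ≤ w * (A1 * B - 1) := by
          rw [hw]
          apply mul_le_mul_of_nonneg_left _ (by linarith)
          have : 3.5 * B ≤ A1 * B := by gcongr; linarith
          linarith
        have q3 : 0 ≤ (1/2 - z') * (B - 1) := mul_nonneg (by linarith) (by linarith)
        linarith
      · have hb : X ≤ b := by
          rcases hb with hb | hb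
          · exact hb
          · exact absurd hb hr
        have q1 : (-z') * (B - 1) ≤ (A - A1) * (B - 1) := by
          apply mul_le_mul_of_nonneg_right <;> linarith
        have q2 : z' * (B - 1) ≤ w * (A1 * B - 1) := by
          rw [hw]; apply mul_le_mul_of_nonneg_left <;> linarith
        linarith
  have k2 : (A1 - 1) * (B * A - 1) ≤ (A - 1 + w) * (A1 * B - 1) := by linarith
  have k3 := mul_le_mul_of_nonneg_left k2 (mul_pos ht0 h20).le
  have e1 : t * θ2 * ((A1 - 1) * (B * A - 1)) = (1 - θ2) * (B - t) := by
    have : t * θ2 * ((A1 - 1) * (B * A - 1)) = (A1 * θ2 - θ2) * (B * (t * A) - t) := by ring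
    rw [this, hA1, ht]; ring
  have e2 : t * θ2 * ((A - 1 + w) * (A1 * B - 1)) = (1 - t + z) * (B - θ2) := by
    have : t * θ2 * ((A - 1 + w) * (A1 * B - 1)) = (t * A - t + t * w) * (A1 * θ2 * B - θ2) := by
      ring
    rw [this, hA1, ht, hz]; ring
  linarith

/-- `Ψ0` at one level from the next. -/
lemma psi0_step (h : Cst r Rs X θ Y θ2 m) {t z t' z' b e w : ℝ}
    (he : e = 1 ∨ e = -1) (ht0 : 0 < t) (ht1 : t ≤ 1/2) (ht : t * (b + e * t') = 1)
    (ht0' : 0 < t') (ht1' : t' ≤ 1/2) (htr' : t' * (r - 1/2) ≤ 1)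
    (hz0' : 0 ≤ z') (hzt' : z' ≤ t')
    (htz' : t' ≤ θ2 + z') (hz : z = t * w)
    (ho : (w = 1 - z' ∧ Rs ≤ b) ∨ (w = z' ∧ (X ≤ b ∨ r = 2))) :
    (Rs - θ2 - 2) * (X + θ - t) ≤ (1 - t - z) * ((Rs - θ2) * (X + θ) - 1) := by
  have hX4 := h.hX4
  have hRs3 := h.hRs3
  have hθ0 := h.hθ0
  have h20 := h.h20
  have h21 := h.h21
  have hA : 2 ≤ b + e * t' := by
    by_contra hh; push Not at hh; nlinarith only [hh, ht0, ht1, ht]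
  have hAb : b - t' ≤ b + e * t' := by rcases he with rfl | rfl <;> linarith
  set A := b + e * t' with hAdef
  set B := X + θ with hBdef
  have hB3 : 4 ≤ B := by linarith
  have hAB : 2.5 * B - 1 ≤ (Rs - θ2) * B - 1 := by nlinarith only [hRs3, h21, hB3]
  have key : 0 ≤ (A - (Rs - θ2)) * (2 * B - 1) + (1 - w) * ((Rs - θ2) * B - 1) := by
    rcases ho with ⟨hw, hb⟩ | ⟨hw, hb⟩
    · have q1 : (-z') * (2 * B - 1) ≤ (A - (Rs - θ2)) * (2 * B - 1) := by
        apply mul_le_mul_of_nonneg_right <;> linarith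
      have q2 : z' * (2 * B - 1) ≤ (1 - w) * ((Rs - θ2) * B - 1) := by
        rw [hw, sub_sub_cancel]; apply mul_le_mul_of_nonneg_left <;> linarith
      linarith
    · rw [hw]
      by_cases h2 : r = 2
      · obtain ⟨c1, c2, c3⟩ := h.hr2c h2
        have q1 : (-(1/2)) * (2 * B - 1) ≤ (A - (Rs - θ2)) * (2 * B - 1) := by
          apply mul_le_mul_of_nonneg_right <;> linarith
        have q2 : 1/2 * (2.5 * B - 1) ≤ (1 - z') * ((Rs - θ2) * B - 1) := by
          apply mul_le_mul <;> linarith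
        linarith
      · have hb : X ≤ b := by
          rcases hb with hb | hb
          · exact hb
          · exact absurd hb h2
        rcases h.hXcase with hX | ⟨hX, h4⟩
        · have : 0 ≤ (A - (Rs - θ2)) * (2 * B - 1) := mul_nonneg (by linarith) (by linarith)
          have : 0 ≤ (1 - z') * ((Rs - θ2) * B - 1) := mul_nonneg (by linarith) (by linarith)
          linarith
        · have h5 := h.hRs5 h4
          have ht' : t' ≤ 2/7 := by nlinarith only [htr', h4, ht0']
          have q1 : (-(9/7)) * (2 * B - 1) ≤ (A - (Rs - θ2)) * (2 * B - 1) := by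
            apply mul_le_mul_of_nonneg_right <;> linarith
          have q3 : 4.5 * B ≤ (Rs - θ2) * B := by gcongr; linarith
          have q2 : 5/7 * (4.5 * B - 1) ≤ (1 - z') * ((Rs - θ2) * B - 1) := by
            apply mul_le_mul <;> linarith
          linarith
  have k2 : (Rs - θ2 - 2) * (B * A - 1) ≤ (A - 1 - w) * ((Rs - θ2) * B - 1) := by linarith
  have k3 := mul_le_mul_of_nonneg_left k2 ht0.le
  have e1 : t * ((Rs - θ2 - 2) * (B * A - 1)) = (Rs - θ2 - 2) * (B - t) := by
    linear_combination (Rs - θ2 - 2) * B * ht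
  have e2 : t * ((A - 1 - w) * ((Rs - θ2) * B - 1)) = (1 - t - z) * ((Rs - θ2) * B - 1) := by
    rw [hz]; linear_combination ((Rs - θ2) * B - 1) * ht
  linarith

lemma t_le (h : Cst r Rs X θ Y θ2 m) {t : ℝ} (ht0 : 0 ≤ t) (htr : t * (r - 1/2) ≤ 1) :
    t * Rs ≤ 2 := by
  have := h.hRsr
  have := h.hr2
  have : t * Rs ≤ t * (2 * (r - 1/2)) := by gcongr; linarith
  linarith

/-- The four values. -/
lemma four (h : Cst r Rs X θ Y θ2 m) {x y e t z p q : ℝ} (hg : Good r Y m x y)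
    (he : e = 1 ∨ (e = -1 ∧ Good3 r Rs X θ Y θ2 m x y)) (ht0 : 0 < t)
    (htr : t * (r - 1/2) ≤ 1) (hb : Bk Rs θ θ2 t z)
    (psi0 : (Rs - θ2 - 2) * (X + θ - t) ≤ (1 - t - z) * ((Rs - θ2) * (X + θ) - 1))
    (hp : p = 1 ∨ p = -1) (hq : q = 1 ∨ q = -1) :
    m * (1 + e * x * t) ≤ |p - e * (x * q - y)| * |q + t * p - z| := by
  have hX4 := h.hX4
  have hθ1 := h.hθ1
  have hθ0 := h.hθ0
  have hY1 := h.hY1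
  have hY0 := h.hY0
  have hY := h.hY
  have hRs3 := h.hRs3
  have hm0 := h.hm0
  have hm1 := h.hm1
  have hmR := h.hmR
  have hD := h.hDpos
  have hm := h.hm
  have hz0 := hb.z0
  have hzt := hb.zt
  have ht1 := hb.t1
  have h21 := h.h21
  have htRs := h.t_le ht0.le htr
  obtain ⟨x0, x1, yY, yx, yl, gm, s0⟩ := hg
  have hyl' : -Y ≤ y := by nlinarith only [yl, x0, x1, hY0]
  have hxt : 0 ≤ x * t := by positivity
  have hxt1 : x * t ≤ 5/8 * (1/2) := by gcongr
  rw [← abs_mul]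
  have hmt : m ≤ 1 - t := by
    have : Rs * m ≤ Rs * (1 - t) := by linarith
    exact le_of_mul_le_mul_left this (by linarith)
  have hxY : x * Y ≤ x * 0.4344 := by gcongr
  rcases he with he | ⟨he, g3⟩
  · subst he
    have v0 : m * (1 + x * t) ≤ (1 - x + y) * (1 + t - z) := by
      have a1 := s0 t ht0.le ht1 htr
      have a2 : 0 ≤ m * (1 + x * t) := by positivity
      have : (1 - x + y) * 1 ≤ (1 - x + y) * (1 + t - z) := by
        apply mul_le_mul_of_nonneg_left <;> linarith
      linarith
    have v1 : m * (1 + x * t) ≤ (1 - x - y) * (1 + t + z) := by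
      apply mul_le_mul gm _ (by linarith) (by linarith)
      have : x * t ≤ 1 * t := by gcongr; linarith
      linarith
    have v2 : m * (1 + x * t) ≤ (1 + x + y) * (1 - t + z) := by
      rw [mul_comm]
      apply mul_le_mul _ (by linarith) hm0.le (by linarith)
      have : x * t ≤ x * (1/2) := by gcongr
      linarith
    have v3 : m * (1 + x * t) ≤ (1 + x - y) * (1 - t - z) := by
      have b1 : (1 + θ - Y) * (1 + x * t) ≤ (1 + x - y) * (1 + θ * t) := by
        have hq0 : 0 ≤ 1 + θ * t := by positivity
        rcases le_or_gt θ x with hh | hh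
        · have c1 : (1 + x - Y) * (1 + θ * t) ≤ (1 + x - y) * (1 + θ * t) := by
            apply mul_le_mul_of_nonneg_right _ hq0; linarith
          have c2 : 0 ≤ (x - θ) * (1 - t * (1 - Y)) := by
            apply mul_nonneg (by linarith); nlinarith only [ht0, ht1, hY0, hY1]
          linarith
        · have c1 : (1 - x * Y) * (1 + θ * t) ≤ (1 + x - y) * (1 + θ * t) := by
            apply mul_le_mul_of_nonneg_right _ hq0; linarith
          have c2 : 0 ≤ (θ - x) * (Y + t) := by
            apply mul_nonneg <;> linarith
          have c3 : (1 - x * Y) * (1 + θ * t) - (1 + θ - Y) * (1 + x * t) = (θ - x) * (Y + t) := by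
            linear_combination (1 + x * t) * hY
          linarith
      have hN : 0 < 1 + θ - Y := by linarith
      have hθB : θ * (X + θ) ≤ 1 + θ := by
        have := h.hXRs
        have := h.hθ
        have : θ * (X + θ) ≤ θ * (Rs + 1 + θ) := by gcongr
        linarith
      have b2 : (X + θ - 1 - Y) * (1 + θ * t) ≤ (1 + θ - Y) * (X + θ - t) := by
        have c1 : 0 ≤ (1 + θ - Y) * (1 - 2 * t) := mul_nonneg hN.le (by linarith)
        have c2 : 0 ≤ (Y + t) * (1 + θ - θ * (X + θ)) := mul_nonneg (by linarith) (by linarith)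
        have c3 : (1 + θ - Y) * (X + θ - t) - (X + θ - 1 - Y) * (1 + θ * t) =
           (1 + θ - Y) * (1 - 2 * t) + (Y + t) * (1 + θ - θ * (X + θ)) := by
          linear_combination (1 - t - (X + θ)) * hY
        linarith
      have hA : 0 < Rs - θ2 - 2 := by linarith
      have hq0 : 0 < 1 + θ * t := by positivity
      refine le_of_mul_le_mul_left (a := (1 + θ * t) * ((Rs - θ2) * (X + θ) - 1)) ?_
        (mul_pos hq0 (by linarith))
      have hyp : 0 ≤ 1 + x - y := by linarith
      calc (1 + θ * t) * ((Rs - θ2) * (X + θ) - 1) * (m * (1 + x * t))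
          = ((X + θ - 1 - Y) * (1 + θ * t)) * (Rs - θ2 - 2) * (1 + x * t) := by
            linear_combination (1 + θ * t) * (1 + x * t) * hm
        _ ≤ ((1 + θ - Y) * (X + θ - t)) * (Rs - θ2 - 2) * (1 + x * t) := by
            gcongr
        _ = ((1 + θ - Y) * (1 + x * t)) * ((Rs - θ2 - 2) * (X + θ - t)) := by ring
        _ ≤ ((1 + x - y) * (1 + θ * t)) * ((Rs - θ2 - 2) * (X + θ - t)) := by
            apply mul_le_mul_of_nonneg_right b1
            apply mul_nonneg <;> linarith
        _ ≤ ((1 + x - y) * (1 + θ * t)) * ((1 - t - z) * ((Rs - θ2) * (X + θ) - 1)) := by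
            apply mul_le_mul_of_nonneg_left psi0
            positivity
        _ = _ := by ring
    rcases hp with rfl | rfl <;> rcases hq with rfl | rfl
    · refine le_trans ?_ (le_abs_self _); linarith
    · refine le_trans ?_ (neg_le_abs _); linarith
    · refine le_trans ?_ (neg_le_abs _); linarith
    · refine le_trans ?_ (le_abs_self _); linarith
  · subst he
    have x2 := g3.x2
    have v0 : m * (1 - x * t) ≤ (1 - x + y) * (1 - t - z) := by
      have b1 := g3.phi0 t ht0.le ht1
      have hA : 0 < Rs - θ2 - 2 := by linarith
      have hBt : 0 < X + θ - t := by linarith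
      refine le_of_mul_le_mul_left (a := (X + θ - t) * ((Rs - θ2) * (X + θ) - 1)) ?_
        (mul_pos hBt (by linarith))
      have hyp : 0 ≤ 1 - x + y := by linarith
      calc (X + θ - t) * ((Rs - θ2) * (X + θ) - 1) * (m * (1 - x * t))
          = ((X + θ - 1 - Y) * (1 - x * t)) * ((Rs - θ2 - 2) * (X + θ - t)) := by
            linear_combination (X + θ - t) * (1 - x * t) * hm
        _ ≤ ((1 - x + y) * (X + θ - t)) * ((Rs - θ2 - 2) * (X + θ - t)) := by
            apply mul_le_mul_of_nonneg_right b1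
            positivity
        _ ≤ ((1 - x + y) * (X + θ - t)) * ((1 - t - z) * ((Rs - θ2) * (X + θ) - 1)) := by
            apply mul_le_mul_of_nonneg_left psi0
            positivity
        _ = _ := by ring
    have v1 := g3.w1 t z hb
    have hmx : m * (1 - x * t) ≤ m * 1 := by gcongr; linarith
    have v2 : m * (1 - x * t) ≤ (1 + x + y) * (1 + t + z) := by
      have : 1 * 1 ≤ (1 + x + y) * (1 + t + z) := by apply mul_le_mul <;> linarith
      linarith
    have v3 : m * (1 - x * t) ≤ (1 + x - y) * (1 + t - z) := by
      have : (1 + x - y) * 1 ≤ (1 + x - y) * (1 + t - z) := by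
        apply mul_le_mul_of_nonneg_left <;> linarith
      have h1 : m ≤ 1 - x * Y := by
        have hYRs := h.hYRs
        have : Rs * m ≤ Rs * (1 - x * Y) := by
          have : x * (Y * Rs) ≤ 2/5 * 2 := by
            rw [hYRs]; apply mul_le_mul <;> linarith
          linarith
        exact le_of_mul_le_mul_left this (by linarith)
      linarith
    rcases hp with rfl | rfl <;> rcases hq with rfl | rfl
    · refine le_trans ?_ (le_abs_self _); linarith
    · refine le_trans ?_ (neg_le_abs _); linarith
    · refine le_trans ?_ (neg_le_abs _); linarith
    · refine le_trans ?_ (le_abs_self _); linarith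
end Cst


namespace Cst
variable {r Rs X θ Y θ2 m : ℝ}

lemma level1 (h : Cst r Rs X θ Y θ2 m) {x y e t z A : ℝ} {a p q : ℤ} (hg : Good r Y m x y)
    (he : e = 1 ∨ (e = -1 ∧ Good3 r Rs X θ Y θ2 m x y)) (ht0 : 0 < t) (hzt : z ≤ t) (hz0 : 0 ≤ z)
    (hA : t * A = 1) (hA2 : 2 ≤ A) (haA : (a : ℝ) - 1/2 ≤ A) (ha : 2 ≤ a)
    (hp : Odd p) (hq : Odd q)
    (hX : |(p : ℝ) - e * (x * q - y)| < a + e * x) (hYv : |(q : ℝ) + t * p - z| < 1) :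
    ∃ σ : ℤ, (σ = 1 ∨ σ = -1) ∧ q = σ ∧
      (p = 1 ∨ p = -1 ∨ ∃ U : ℤ, p = -σ * U ∧ 3 ≤ U ∧ U ≤ a) := by
  have hY1 := h.hY1
  have hY0 := h.hY0
  obtain ⟨x0, x1, yY, yx, yl, gm, s0⟩ := hg
  have hyl' : -Y ≤ y := by nlinarith only [yl, x0, x1, hY0]
  obtain ⟨σ, w, hσ, hqw, hw⟩ : ∃ σ w : ℤ, (σ = 1 ∨ σ = -1) ∧ q = σ * w ∧ 1 ≤ w := by
    rcases lt_trichotomy q 0 with hh | hh | hh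
    · exact ⟨-1, -q, Or.inr rfl, by ring, by lia⟩
    · subst hh; simp at hq
    · exact ⟨1, q, Or.inl rfl, by ring, by lia⟩
  obtain ⟨U, hpU⟩ : ∃ U : ℤ, p = -σ * U := by
    refine ⟨-σ * p, ?_⟩
    rcases hσ with rfl | rfl <;> ring
  have hwo : Odd w := by rcases hσ with rfl | rfl <;> simpa [hqw] using hq
  have hUo : Odd U := by rcases hσ with rfl | rfl <;> simpa [hpU] using hp
  have hwR : (1 : ℝ) ≤ w := by exact_mod_cast hw
  have haR : (2 : ℝ) ≤ a := by exact_mod_cast ha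
  have hU1 : ((w : ℝ) - 1) * A - 1 < U := by
    have : (w : ℝ) - 1 - t < t * U := by
      subst hqw hpU
      rw [abs_lt] at hYv
      rcases hσ with rfl | rfl <;> push_cast at hYv <;> linarith
    have h1 := mul_lt_mul_of_pos_right this (by linarith : 0 < A)
    have h2 : t * U * A = U := by linear_combination U * hA
    have h3 : ((w : ℝ) - 1 - t) * A = (w - 1) * A - 1 := by linear_combination -hA
    linarith
  have hU2 : (U : ℝ) + e * x * (w - 1) < a + Y := by
    have he' : e = 1 ∨ e = -1 := by rcases he with he | ⟨he, _⟩ <;> simp [he]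
    subst hqw hpU
    rw [abs_lt] at hX
    rcases hσ with rfl | rfl <;> rcases he' with rfl | rfl <;> push_cast at hX <;> linarith
  have hprod : (w - 1) * (A + e * x) < a + 1 + Y := by linarith
  have hAe : (a : ℝ) - 0.9 ≤ A + e * x ∧ (e = 1 → (a : ℝ) - 1/2 ≤ A + e * x) := by
    rcases he with he | ⟨he, g3⟩
    · subst he; constructor
      · linarith
      · intro; linarith
    · subst he; constructor
      · linarith [g3.x2]
      · intro h1; norm_num at h1
  refine ⟨σ, hσ, ?_⟩
  have hw3 : w < 5 := by
    by_contra hh; push Not at hh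
    have hwR5 : (5 : ℝ) ≤ w := by exact_mod_cast hh
    have : (4 : ℝ) * (a - 0.9) ≤ (w - 1) * (A + e * x) := by
      apply mul_le_mul <;> linarith [hAe.1]
    linarith
  have hw1 : w = 1 := by
    by_contra hne
    have hw3' : w = 3 := by
      obtain ⟨k, hk⟩ := hwo; lia
    subst hw3'
    push_cast at hprod hU1 hU2
    rcases he with he | ⟨he, g3⟩
    · subst he
      have : (4 : ℝ) ≤ 2 * A := by linarith
      have ha3 : a < 3 := by
        by_contra hh; push Not at hh
        have : (3 : ℝ) ≤ a := by exact_mod_cast hh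
        linarith [hAe.2 rfl]
      have : a = 2 := by lia
      subst this
      push_cast at *
      linarith
    · subst he
      have x2 := g3.x2
      have ha3 : a < 4 := by
        by_contra hh; push Not at hh
        have : (4 : ℝ) ≤ a := by exact_mod_cast hh
        linarith [hAe.1]
      have ha3R : (a : ℝ) ≤ 3 := by exact_mod_cast (by lia : a ≤ 3)
      have hU3 : (3 : ℝ) < U := by linarith
      have hU3' : 3 < U := by exact_mod_cast hU3
      have hU5 : 5 ≤ U := by obtain ⟨k, hk⟩ := hUo; lia
      have hU5' : (5 : ℝ) ≤ U := by exact_mod_cast hU5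
      linarith
  subst hw1
  refine ⟨by linarith, ?_⟩
  push_cast at hU1 hU2
  have hUm : -1 < U := by
    have : ((-1 : ℤ) : ℝ) < U := by push_cast; linarith
    exact_mod_cast this
  have hUa : U ≤ a := by
    have : (U : ℝ) < ((a + 1 : ℤ) : ℝ) := by push_cast; linarith
    have : U < a + 1 := by exact_mod_cast this
    lia
  by_cases hU : U = 1
  · subst hU
    rcases hσ with rfl | rfl
    · right; left; simpa using hpU
    · left; simpa using hpU
  · right; right
    refine ⟨U, hpU, ?_, hUa⟩
    obtain ⟨k, hk⟩ := hUo; lia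

/-- Final numeric case. -/
lemma level2 (h : Cst r Rs X θ Y θ2 m) {x y e t' z' e' A p' r' : ℝ} {a U V σ : ℤ}
    (hg : Good r Y m x y)
    (he : e = 1 ∨ (e = -1 ∧ Good3 r Rs X θ Y θ2 m x y))
    (he' : e' = 1 ∨ e' = -1) (ht0 : 0 < t') (hzt : z' ≤ t') (hz0 : 0 ≤ z') (ht1 : t' ≤ 1/2)
    (htr : t' * (r - 1/2) ≤ 1)
    (hA : A = a + e' * t') (hU : 3 ≤ U) (hV : 3 ≤ V) (haUV : a ≤ U + V + 1)
    (hp : U + e * x - Y ≤ p') (hr : V + e' * t' - z' ≤ r') : m * (A + e * x) ≤ p' * r' := by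
  have hY1 := h.hY1
  have hY0 := h.hY0
  have hm0 := h.hm0
  have hm1 := h.hm1
  have hmR := h.hmR
  have hUR : (3 : ℝ) ≤ U := by exact_mod_cast hU
  have hVR : (3 : ℝ) ≤ V := by exact_mod_cast hV
  have haR : (a : ℝ) ≤ U + V + 1 := by exact_mod_cast haUV
  have x0 := hg.x0
  have x1 := hg.x1
  have hR3 := h.hRs3
  set P := U + e * x - Y with hP
  set Q := V + e' * t' - z' with hQ
  have hAle : A + e * x ≤ P + Q + 1 + Y + z' := by rw [hA]; linarith
  have hQ2 : 3 - t' - z' ≤ Q := by rcases he' with he' | he' <;> rw [hQ, he'] <;> linarith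
  have hP2 : 2.16 ≤ P := by
    rcases he with he | ⟨he, g3⟩ <;> rw [hP, he]
    · linarith
    · linarith [g3.x2]
  suffices m * (P + Q + 1 + Y + z') ≤ P * Q by
    have h1 : m * (A + e * x) ≤ m * (P + Q + 1 + Y + z') := by gcongr
    have h2 : P * Q ≤ p' * r' := by
      apply mul_le_mul hp hr <;> linarith
    linarith
  rcases le_or_gt Rs 6 with h6 | h6
  · have hm : m ≤ 2/3 := by nlinarith only [hmR, h6, hR3, hm0]
    have h1 : m * (P + Q + 1 + Y + z') ≤ 2/3 * (P + Q + 2) := by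
      apply mul_le_mul <;> linarith
    have h2 : 0 ≤ (P - 2) * (Q - 2) := mul_nonneg (by linarith) (by linarith)
    linarith
  · have hr5 : 5 ≤ r := by linarith [h.hRsr]
    have hr6 : 6 ≤ r := by rcases h.hr56 hr5 with h' | h' <;> linarith
    have ht' : t' ≤ 0.182 := by nlinarith only [htr, hr6, ht0]
    have hY6 : Y ≤ 0.218 := by
      have := h.hYRs
      have := h.hθ1
      nlinarith only [h.hYRs, h6, h.hθ1, hY0]
    have hP3 : 2.6 ≤ P := by
      rcases he with he | ⟨he, g3⟩ <;> rw [hP, he]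
      · linarith
      · have : x ≤ 0.174 := by nlinarith only [g3.x5 hr5, hr6, x0]
        linarith
    have h1 : m * (P + Q + 1 + Y + z') ≤ 1 * (P + Q + 1.4) := by
      apply mul_le_mul <;> linarith
    have h2 : 0 ≤ (P - 2.6) * (Q - 2.6) := mul_nonneg (by linarith) (by linarith)
    linarith
end Cst


/-- The abstract data of a continued fraction tail together with its sign pattern. -/
structure Dat (r Rs X : ℝ) (a e s : ℕ → ℤ) (t z : ℕ → ℝ) : Prop where
  t0 : ∀ i, 0 < t i
  t1 : ∀ i, t i ≤ 1/2
  ht : ∀ i, t i * (a i + e (i+1) * t (i+1)) = 1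
  he : ∀ i, e i = 1 ∨ e i = -1
  ar : ∀ i, r ≤ a i
  a2 : ∀ i, 2 ≤ a i
  ao : ∀ i, Odd (a i) → (a i : ℝ) = Rs ∨ Rs + 2 ≤ a i
  ae : ∀ i, ¬ Odd (a i) → X ≤ a i ∨ (a i = 2 ∧ r = 2)
  a2e : ∀ i, a i = 2 → e (i+1) = 1
  hs : ∀ i, s i = 1 ∨ s i = -1
  so : ∀ i, Odd (a i) → s (i+1) = - s i
  se : ∀ i, ¬ Odd (a i) → s (i+1) = s i
  zo : ∀ i, Odd (a i) → z i = t i * (1 - z (i+1))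
  ze : ∀ i, ¬ Odd (a i) → z i = t i * z (i+1)
  z0 : ∀ i, 0 ≤ z i
  zt : ∀ i, z i ≤ t i

open Classical in
/-- The forward states. -/
noncomputable def fxy (a e : ℕ → ℤ) : ℕ → ℝ × ℝ
  | 0 => (0, 0)
  | i + 1 => (1 / (a i + e i * (fxy a e i).1),
      1 / (a i + e i * (fxy a e i).1) *
        (if Odd (a i) then 1 + e i * (fxy a e i).2 else -(e i * (fxy a e i).2)))

namespace Dat
variable {r Rs X θ Y θ2 m : ℝ} {a e s : ℕ → ℤ} {t z : ℕ → ℝ}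

lemma heR (d : Dat r Rs X a e s t z) (i : ℕ) : (e i : ℝ) = 1 ∨ (e i : ℝ) = -1 := by
  rcases d.he i with h | h <;> simp [h]

lemma tr (d : Dat r Rs X a e s t z) (i : ℕ) : t i * (r - 1/2) ≤ 1 := by
  have h1 := d.ht i
  have h2 := d.t0 i
  have h3 := d.t1 (i+1)
  have h4 := d.t0 (i+1)
  have h5 := d.ar i
  have : r - 1/2 ≤ a i + e (i+1) * t (i+1) := by
    rcases d.heR (i+1) with h | h <;> rw [h] <;> linarith
  calc _ ≤ t i * (a i + e (i+1) * t (i+1)) := by gcongr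
    _ = 1 := h1

lemma tz (d : Dat r Rs X a e s t z) (h : Cst r Rs X θ Y θ2 m) (i : ℕ) : t i ≤ θ2 + z i := by
  by_cases h2 : r = 2
  · obtain ⟨-, -, h3⟩ := h.hr2c h2
    linarith [d.t1 i, d.z0 i]
  have key : ∀ n i, t i - z i - θ2 ≤ (1/2 : ℝ)^n := by
    intro n
    induction n with
    | zero => intro i; simp; linarith [d.t1 i, d.z0 i, h.h20]
    | succ n ih =>
      intro i
      have := h.tz_step (t := t i) (z := z i) (t' := t (i+1)) (z' := z (i+1)) (b := a i)
        (e := e (i+1)) (η := (1/2)^n) (od := Odd (a i)) h2 (d.heR _) (d.t0 i) (d.t1 i) (d.ht i)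
        (d.t0 _) (d.tr i) (d.tr _) (d.z0 _) (d.zt _) (by positivity) ?_ (ih _)
      · rw [pow_succ]; linarith
      · by_cases ho : Odd (a i)
        · exact Or.inl ⟨ho, d.zo i ho⟩
        · refine Or.inr ⟨ho, d.ze i ho, ?_⟩
          rcases d.ae i ho with h | h
          · exact h
          · exact absurd h.2 h2
  by_contra hh; push Not at hh
  obtain ⟨n, hn⟩ := exists_pow_lt_of_lt_one (by linarith : 0 < t i - z i - θ2)
    (by norm_num : (1/2 : ℝ) < 1)
  linarith [key n i]

lemma exw (d : Dat r Rs X a e s t z) (i : ℕ) : ∃ w, z i = t i * w ∧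
    ((w = 1 - z (i+1) ∧ Rs ≤ a i) ∨ (w = z (i+1) ∧ (X ≤ a i ∨ r = 2))) := by
  by_cases ho : Odd (a i)
  · refine ⟨_, d.zo i ho, Or.inl ⟨rfl, ?_⟩⟩
    rcases d.ao i ho with h | h <;> linarith
  · refine ⟨_, d.ze i ho, Or.inr ⟨rfl, ?_⟩⟩
    rcases d.ae i ho with h | h
    · exact Or.inl h
    · exact Or.inr h.2

lemma bk (d : Dat r Rs X a e s t z) (h : Cst r Rs X θ Y θ2 m) (i : ℕ) :
    Bk Rs θ θ2 (t i) (z i) := by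
  obtain ⟨w, hz, ho⟩ := d.exw i
  exact ⟨d.z0 i, d.zt i, d.t1 i, d.tz h i, h.psi1_step (d.heR (i+1)) (d.t0 i) (d.t1 i) (d.ht i)
    (d.t0 _) (d.t1 _) (d.z0 _) (d.zt _) (d.tz h _) hz ho⟩

lemma psi0 (d : Dat r Rs X a e s t z) (h : Cst r Rs X θ Y θ2 m) (i : ℕ) :
    (Rs - θ2 - 2) * (X + θ - t i) ≤ (1 - t i - z i) * ((Rs - θ2) * (X + θ) - 1) := by
  obtain ⟨w, hz, ho⟩ := d.exw i
  exact h.psi0_step (d.heR (i+1)) (d.t0 i) (d.t1 i) (d.ht i)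
    (d.t0 _) (d.t1 _) (d.tr _) (d.z0 _) (d.zt _) (d.tz h _) hz ho

lemma good (d : Dat r Rs X a e s t z) (h : Cst r Rs X θ Y θ2 m) (i : ℕ) :
    Good r Y m (fxy a e i).1 (fxy a e i).2 ∧
    ((e i : ℝ) = 1 ∨ ((e i : ℝ) = -1 ∧ Good3 r Rs X θ Y θ2 m (fxy a e i).1 (fxy a e i).2)) := by
  induction i with
  | zero =>
    refine ⟨h.good0.g, ?_⟩
    rcases d.heR 0 with h1 | h1
    · exact Or.inl h1
    · exact Or.inr ⟨h1, h.good0⟩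
  | succ i ih =>
    obtain ⟨hg, hc⟩ := ih
    have ha2 : (2 : ℝ) ≤ a i := by exact_mod_cast d.a2 i
    have hB : 0 < a i + e i * (fxy a e i).1 := by
      have := hg.x0
      have := hg.x1
      rcases d.heR i with h1 | h1 <;> rw [h1] <;> linarith
    have hx : (fxy a e (i+1)).1 * (a i + e i * (fxy a e i).1) = 1 := by
      simp only [fxy]; field_simp
    have hy : (fxy a e (i+1)).2 = (fxy a e (i+1)).1 *
        (if Odd (a i) then 1 + e i * (fxy a e i).2 else -(e i * (fxy a e i).2)) := by
      simp only [fxy]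
    set x := (fxy a e i).1
    set y := (fxy a e i).2
    set x' := (fxy a e (i+1)).1
    set y' := (fxy a e (i+1)).2
    have key : Good3 r Rs X θ Y θ2 m x' y' ∨ (a i = 2 ∧ Good r Y m x' y') := by
      by_cases ho : Odd (a i)
      · left
        rw [if_pos ho] at hy
        have hR := d.ao i ho
        rcases hc with h1 | ⟨h1, g3⟩
        · rw [h1] at hx hy
          exact h.stepOP hg (a := a i) (by rcases hR with h | h <;> linarith) (by linarith)
            (by linarith)
        · rw [h1] at hx hy
          exact h.stepOM g3 (a := a i) hR (by linarith) (by linarith)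
      · rw [if_neg ho] at hy
        rcases d.ae i ho with hX | ⟨h2, hr⟩
        · left
          rcases hc with h1 | ⟨h1, g3⟩
          · rw [h1] at hx hy
            exact h.stepEP hg (a := a i) hX (by linarith) (by linarith)
          · rw [h1] at hx hy
            exact h.stepEM g3 (a := a i) hX (by linarith) (by linarith)
        · right
          refine ⟨h2, ?_⟩
          have h2R : (a i : ℝ) = 2 := by rw [h2]; norm_num
          rw [h2R] at hx
          rcases hc with h1 | ⟨h1, g3⟩
          · rw [h1] at hx hy
            exact h.step2P hr hg (by linarith) (by linarith)
          · rw [h1] at hx hy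
            exact h.step2M hr g3 (by linarith) (by linarith)
    rcases key with h3 | ⟨h2, hg'⟩
    · refine ⟨h3.g, ?_⟩
      rcases d.heR (i+1) with h1 | h1
      · exact Or.inl h1
      · exact Or.inr ⟨h1, h3⟩
    · exact ⟨hg', Or.inl (by rw [d.a2e i h2]; norm_num)⟩

open Classical in
/-- The core estimate. -/
theorem core (d : Dat r Rs X a e s t z) (h : Cst r Rs X θ Y θ2 m) (u v : ℕ → ℤ)
    (hu0 : Odd (u 0)) (hv0 : Odd (v 0)) (hu : ∀ i, u (i+1) = e (i+1) * v i)
    (hv : ∀ i, v (i+1) = a i * v i + u i - if Odd (a i) then s i else 0) :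
    m ≤ |(u 0 : ℝ)| * |v 0 + t 0 * u 0 - s 0 * z 0| := by
  have hodd : ∀ i, Odd (u i) ∧ Odd (v i) := by
    intro i
    induction i with
    | zero => exact ⟨hu0, hv0⟩
    | succ i ih =>
      obtain ⟨h1, h2⟩ := ih
      refine ⟨?_, ?_⟩
      · rw [hu]; rcases d.he (i+1) with h3 | h3 <;> rw [h3] <;> simpa using h2
      · rw [hv]
        by_cases ho : Odd (a i)
        · rw [if_pos ho]
          have hso : Odd (s i) := by rcases d.hs i with h3 | h3 <;> rw [h3] <;> decide
          exact ((ho.mul h2).add_odd h1).sub_odd hso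
        · rw [if_neg ho, sub_zero]
          exact ((Int.not_odd_iff_even.1 ho).mul_right _).add_odd h1
  set x : ℕ → ℝ := fun i => (fxy a e i).1 with hxd
  set y : ℕ → ℝ := fun i => (fxy a e i).2 with hyd
  have hg : ∀ i, Good r Y m (x i) (y i) := fun i => (d.good h i).1
  have hc : ∀ i, ((e i : ℝ) = 1 ∨ ((e i : ℝ) = -1 ∧ Good3 r Rs X θ Y θ2 m (x i) (y i))) :=
    fun i => (d.good h i).2
  have hx0 : ∀ i, 0 ≤ x i := fun i => (hg i).x0
  have hx1 : ∀ i, x i ≤ 5/8 := fun i => (hg i).x1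
  have ha2 : ∀ i, (2 : ℝ) ≤ a i := fun i => by exact_mod_cast d.a2 i
  have hB : ∀ i, 0 < a i + e i * x i := by
    intro i
    have := ha2 i
    have := hx0 i
    have := hx1 i
    rcases d.heR i with h1 | h1 <;> rw [h1] <;> linarith
  have hx : ∀ i, x (i+1) * (a i + e i * x i) = 1 := by
    intro i
    have := hB i
    simp only [hxd, fxy] at this ⊢
    field_simp
  have hy : ∀ i, y (i+1) = x (i+1) * (if Odd (a i) then 1 + e i * y i else -(e i * y i)) := by
    intro i; simp only [hxd, hyd, fxy]
  have hs2 : ∀ i, (s i : ℝ) = 1 ∨ (s i : ℝ) = -1 := by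
    intro i; rcases d.hs i with h1 | h1 <;> simp [h1]
  set Xv : ℕ → ℝ := fun i => u i - e i * (x i * v i - s i * y i) with hXv
  set Yv : ℕ → ℝ := fun i => v i + t i * u i - s i * z i with hYv
  have hYs : ∀ i, t i * Yv (i+1) = Yv i := by
    intro i
    simp only [hYv]
    have e1 := d.ht i
    have e2 : ((u (i+1) : ℤ) : ℝ) = e (i+1) * v i := by rw [hu]; push_cast; ring
    by_cases ho : Odd (a i)
    · have e3 : ((v (i+1) : ℤ) : ℝ) = a i * v i + u i - s i := by
        rw [hv, if_pos ho]; push_cast; ring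
      have e4 := d.zo i ho
      have e5 : (s (i+1) : ℝ) = - s i := by rw [d.so i ho]; push_cast; ring
      rw [e2, e3, e4, e5]; linear_combination (v i : ℝ) * e1
    · have e3 : ((v (i+1) : ℤ) : ℝ) = a i * v i + u i := by
        rw [hv, if_neg ho]; push_cast; ring
      have e4 := d.ze i ho
      have e5 : (s (i+1) : ℝ) = s i := by rw [d.se i ho]
      rw [e2, e3, e4, e5]; linear_combination (v i : ℝ) * e1
  have hXs : ∀ i, Xv (i+1) = -(e (i+1) * x (i+1) * Xv i) := by
    intro i
    simp only [hXv]
    have e1 := hx i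
    have e2 : ((u (i+1) : ℤ) : ℝ) = e (i+1) * v i := by rw [hu]; push_cast; ring
    by_cases ho : Odd (a i)
    · have e3 : ((v (i+1) : ℤ) : ℝ) = a i * v i + u i - s i := by
        rw [hv, if_pos ho]; push_cast; ring
      have e4 := hy i
      rw [if_pos ho] at e4
      have e5 : (s (i+1) : ℝ) = - s i := by rw [d.so i ho]; push_cast; ring
      rw [e2, e3, e4, e5]; linear_combination (-(e (i+1) : ℝ) * v i) * e1
    · have e3 : ((v (i+1) : ℤ) : ℝ) = a i * v i + u i := by
        rw [hv, if_neg ho]; push_cast; ring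
      have e4 := hy i
      rw [if_neg ho] at e4
      have e5 : (s (i+1) : ℝ) = s i := by rw [d.se i ho]
      rw [e2, e3, e4, e5]; linear_combination (-(e (i+1) : ℝ) * v i) * e1
  have hXa : ∀ i, |Xv (i+1)| = x (i+1) * |Xv i| := by
    intro i
    rw [hXs, abs_neg, abs_mul, abs_mul, abs_of_nonneg (hx0 _)]
    rcases d.heR (i+1) with h1 | h1 <;> rw [h1] <;> simp
  have hYa : ∀ i, t i * |Yv (i+1)| = |Yv i| := by
    intro i
    rw [← hYs i, abs_mul, abs_of_pos (d.t0 i)]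
  have hX0 : Xv 0 = u 0 := by simp [hXv, hxd, hyd, fxy]
  -- conservation
  set c := |(u 0 : ℝ)| * |Yv 0| with hcd
  have hcons : ∀ i, |Xv i| * |Yv i| = (1 + e i * x i * t i) * c := by
    intro i
    induction i with
    | zero =>
      have : x 0 = 0 := by simp [hxd, fxy]
      rw [hX0, this, hcd]; ring
    | succ i ih =>
      have ht0 := d.t0 i
      apply mul_left_cancel₀ ht0.ne'
      have e1 : t i * (|Xv (i+1)| * |Yv (i+1)|) = x (i+1) * (|Xv i| * |Yv i|) := by
        rw [hXa, ← hYa i]; ring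
      rw [e1, ih]
      have e2 := d.ht i
      have e3 := hx i
      linear_combination (-x (i+1) * c) * e2 + (t i * c) * e3
  have hpos : ∀ i, 0 < 1 + e i * x i * t i := by
    intro i
    have h1 := hx0 i
    have h2 := hx1 i
    have h3 := d.t0 i
    have h4 := d.t1 i
    have h5 : x i * t i ≤ 5/8 * (1/2) := by gcongr
    have h6 : 0 ≤ x i * t i := by positivity
    rcases d.heR i with h1 | h1 <;> rw [h1] <;> linarith
  have fin : ∀ i, m * (1 + e i * x i * t i) ≤ |Xv i| * |Yv i| → m ≤ c := by
    intro i hi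
    rw [hcons] at hi
    have := hpos i
    exact le_of_mul_le_mul_right (by linarith) this
  -- hats
  have hatX : ∀ i, |Xv i| = |((s i * u i : ℤ) : ℝ) - e i * (x i * (s i * v i : ℤ) - y i)| := by
    intro i
    have : |Xv i| = |(s i : ℝ) * Xv i| := by
      rw [abs_mul]; rcases hs2 i with h1 | h1 <;> rw [h1] <;> simp
    rw [this]
    congr 1
    simp only [hXv]; push_cast
    have : (s i : ℝ) * s i = 1 := by rcases hs2 i with h1 | h1 <;> rw [h1] <;> norm_num
    linear_combination (e i * y i) * this
  have hatY : ∀ i, |Yv i| = |((s i * v i : ℤ) : ℝ) + t i * (s i * u i : ℤ) - z i| := by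
    intro i
    have : |Yv i| = |(s i : ℝ) * Yv i| := by
      rw [abs_mul]; rcases hs2 i with h1 | h1 <;> rw [h1] <;> simp
    rw [this]
    congr 1
    simp only [hYv]; push_cast
    have : (s i : ℝ) * s i = 1 := by rcases hs2 i with h1 | h1 <;> rw [h1] <;> norm_num
    linear_combination (- z i) * this
  have fourV : ∀ i, (s i * u i = 1 ∨ s i * u i = -1) → (s i * v i = 1 ∨ s i * v i = -1) →
      m ≤ c := by
    intro i hp hq
    apply fin i
    rw [hatX, hatY]
    apply h.four (hg i) (hc i) (d.t0 i) (d.tr i) (d.bk h i) (d.psi0 h i)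
    · rcases hp with hp | hp <;> rw [hp] <;> simp
    · rcases hq with hq | hq <;> rw [hq] <;> simp
  -- level selection
  have hdecay : ∀ i, |Xv i| ≤ (5/8)^i * |Xv 0| := by
    intro i
    induction i with
    | zero => simp
    | succ i ih =>
      rw [hXa, pow_succ]
      have := hx1 (i+1)
      have := hx0 (i+1)
      calc x (i+1) * |Xv i| ≤ 5/8 * ((5/8)^i * |Xv 0|) := by gcongr
        _ = _ := by ring
  have hu1 : 1 ≤ |Xv 0| := by
    rw [hX0]
    have : u 0 ≠ 0 := by rintro h0; rw [h0] at hu0; simp at hu0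
    have := Int.one_le_abs this
    exact_mod_cast this
  have hex : ∃ i, |Xv i| < 1 := by
    obtain ⟨n, hn⟩ := exists_pow_lt_of_lt_one (by positivity : 0 < 1 / |Xv 0|)
      (by norm_num : (5/8 : ℝ) < 1)
    refine ⟨n, (hdecay n).trans_lt ?_⟩
    rwa [lt_div_iff₀ (by linarith)] at hn
  obtain ⟨i, hi1, hi2⟩ : ∃ i, 1 ≤ |Xv i| ∧ |Xv (i+1)| < 1 := by
    have hn := Nat.find_spec hex
    have hn0 : Nat.find hex ≠ 0 := by
      intro h0; rw [h0] at hn; linarith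
    obtain ⟨k, hk⟩ := Nat.exists_eq_succ_of_ne_zero hn0
    refine ⟨k, ?_, by rw [hk] at hn; exact hn⟩
    have := Nat.find_min hex (m := k) (by rw [hk]; exact Nat.lt_succ_self k)
    linarith
  have hm0 := h.hm0
  have hm1 := h.hm1
  rcases le_or_gt 1 |Yv i| with hy1 | hy1
  · apply fin i
    have : 1 * 1 ≤ |Xv i| * |Yv i| := by gcongr
    have h1 : m * (1 + e i * x i * t i) ≤ 1 := by
      have k0 := hx0 i
      have k1 := hx1 i
      have k2 := (d.t0 i).le
      rcases d.heR i with h1 | h1 <;> rw [h1]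
      · have k3 := h.t_le k2 (d.tr i)
        have k4 := h.hmR
        have k5 := h.hRs3
        have k6 : x i * t i ≤ t i := by nlinarith only [k0, k1, k2]
        have k7 : m * (1 + 1 * x i * t i) ≤ m * (1 + t i) := by gcongr; linarith
        have k8 : m * (1 + t i) ≤ m + t i * (1 - 2 / Rs) := by
          have : m ≤ 1 - 2 / Rs := by
            rw [le_sub_iff_add_le, ← le_sub_iff_add_le', div_le_iff₀ (by linarith)]; linarith
          have := mul_le_mul_of_nonneg_left this k2
          linarith
        have k9 : Rs * (m * (1 + t i)) ≤ Rs * 1 := by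
          have q1 : (m * Rs) * (1 + t i) ≤ (Rs - 2) * (1 + t i) := by gcongr
          linarith
        have := le_of_mul_le_mul_left k9 (by linarith)
        linarith
      · have : 0 ≤ x i * t i := by positivity
        nlinarith only [this, hm0, hm1]
    linarith
  -- main case
  have hXlt : |Xv i| < a i + e i * x i := by
    rw [hXa] at hi2
    have h1 := mul_lt_mul_of_pos_right hi2 (hB i)
    have h2 : x (i+1) * |Xv i| * (a i + e i * x i) = |Xv i| := by
      linear_combination |Xv i| * hx i
    linarith
  have hso : ∀ i, Odd (s i) := fun i => by rcases d.hs i with h3 | h3 <;> rw [h3] <;> decide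
  have hA2 : 2 ≤ a i + e (i+1) * t (i+1) := by
    by_contra hh; push Not at hh; nlinarith only [hh, d.t0 i, d.t1 i, d.ht i]
  have haA : (a i : ℝ) - 1/2 ≤ a i + e (i+1) * t (i+1) := by
    have := d.t1 (i+1)
    have := d.t0 (i+1)
    rcases d.heR (i+1) with h1 | h1 <;> rw [h1] <;> linarith
  obtain ⟨σ, hσ, hq, hp⟩ := h.level1 (a := a i) (p := s i * u i) (q := s i * v i) (hg i) (hc i)
    (d.t0 i) (d.zt i) (d.z0 i) (d.ht i) hA2 haA (d.a2 i) ((hso i).mul (hodd i).1)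
    ((hso i).mul (hodd i).2) (by rw [← hatX]; exact hXlt) (by rw [← hatY]; exact hy1)
  rcases hp with hp | hp | ⟨U, hpU, hU3, hUa⟩
  · exact fourV i (Or.inl hp) (by rw [hq]; exact hσ)
  · exact fourV i (Or.inr hp) (by rw [hq]; exact hσ)
  -- V
  set δ : ℤ := if Odd (a i) then 1 else 0 with hδ
  set V : ℤ := a i - U - σ * δ with hV
  have hσ2 : σ * σ = 1 := by rcases hσ with rfl | rfl <;> rfl
  have hss : ∀ j, s j * s j = 1 := fun j => by rcases d.hs j with h3 | h3 <;> rw [h3] <;> rfl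
  have hvV : s i * v (i+1) = σ * V := by
    rw [hv, hV]
    have e1 : (if Odd (a i) then s i else 0) = s i * δ := by
      rw [hδ]; split_ifs <;> simp
    rw [e1]
    linear_combination (a i) * hq + hpU - δ * hss i + δ * hσ2
  have hδ01 : 0 ≤ δ ∧ δ ≤ 1 := by rw [hδ]; split_ifs <;> simp
  have hVm : -1 ≤ V := by rcases hσ with rfl | rfl <;> lia
  have haUV : a i ≤ U + V + 1 := by rcases hσ with rfl | rfl <;> lia
  have hVo : Odd V := by
    have h1 : Odd (s i * v (i+1)) := (hso i).mul (hodd (i+1)).2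
    rw [hvV] at h1
    exact (Int.odd_mul.1 h1).2
  have hv1 : v (i+1) = s i * σ * V := by
    linear_combination (s i) * hvV - v (i+1) * hss i
  have hu1' : u (i+1) = e (i+1) * s i * σ := by
    rw [hu]; linear_combination (e (i+1) * s i) * hq - e (i+1) * v i * hss i
  by_cases hVV : V = 1 ∨ V = -1
  · apply fourV (i+1)
    · rw [hu1']
      rcases d.hs (i+1) with h1 | h1 <;> rcases d.hs i with h2 | h2 <;> rcases hσ with h3 | h3 <;>
        rcases d.he (i+1) with h4 | h4 <;> rw [h1, h2, h3, h4] <;> simp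
    · rw [hv1]
      rcases d.hs (i+1) with h1 | h1 <;> rcases d.hs i with h2 | h2 <;> rcases hσ with h3 | h3 <;>
        rcases hVV with h4 | h4 <;> rw [h1, h2, h3, h4] <;> simp
  · have hV3 : 3 ≤ V := by obtain ⟨k, hk⟩ := hVo; lia
    have hyY := (hg i).yY
    have hyl : -Y ≤ y i := by nlinarith only [(hg i).yl, hx0 i, hx1 i, h.hY0]
    have hl := h.level2 (p' := |Xv i|) (r' := |Yv (i+1)|) (U := U) (V := V) (a := a i) (σ := σ)
      (hg i) (hc i) (d.heR (i+1)) (d.t0 (i+1)) (d.zt (i+1)) (d.z0 (i+1)) (d.t1 (i+1)) (d.tr (i+1)) rfl hU3 hV3 haUV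
      ?_ ?_
    · apply fin i
      have h1 : |Xv i| * |Yv i| = t i * (|Xv i| * |Yv (i+1)|) := by rw [← hYa i]; ring
      rw [h1]
      have := mul_le_mul_of_nonneg_left hl (d.t0 i).le
      have h2 : t i * (m * (a i + e (i+1) * t (i+1) + e i * x i)) =
        m * (1 + e i * x i * t i) := by
        linear_combination m * d.ht i
      linarith
    · rw [hatX, hpU, hq]
      rcases hσ with rfl | rfl
      · refine le_trans ?_ (neg_le_abs _)
        push_cast
        rcases d.heR i with h1 | h1 <;> rw [h1] <;> linarith
      · refine le_trans ?_ (le_abs_self _)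
        push_cast
        rcases d.heR i with h1 | h1 <;> rw [h1] <;> linarith
    · have h1 : Yv (i+1) = (s i * σ : ℤ) * (V + e (i+1) * t (i+1)) - s (i+1) * z (i+1) := by
        simp only [hYv]; rw [hv1, hu1']; push_cast; ring
      rw [h1]
      have hz := d.z0 (i+1)
      have h2 : (s i * σ = 1) ∨ (s i * σ = -1) := by
        rcases d.hs i with h2 | h2 <;> rcases hσ with h3 | h3 <;> rw [h2, h3] <;> simp
      rcases h2 with h2 | h2 <;> rw [h2]
      · refine le_trans ?_ (le_abs_self _)
        push_cast
        rcases hs2 (i+1) with h1 | h1 <;> rw [h1] <;> linarith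
      · refine le_trans ?_ (neg_le_abs _)
        push_cast
        rcases hs2 (i+1) with h1 | h1 <;> rw [h1] <;> linarith
end Dat

section Bridge
variable {α : ℝ}

lemma nT_prop (hirr : Irrational α) (h0 : 0 < α) (h12 : α < 1 / 2) (i : ℕ) :
    Irrational (nicfT α i) ∧ 0 < nicfT α i ∧ nicfT α i < 1/2 := by
  induction i with
  | zero => exact ⟨hirr, h0, h12⟩
  | succ i ih =>
    have hf : Irrational (Int.fract (nicfT α i)⁻¹) := by
      have := ih.1.inv
      unfold Int.fract
      exact this.sub_intCast _
    have hne : Int.fract (nicfT α i)⁻¹ ≠ 1/2 := by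
      have := hf.ne_rat (1/2)
      push_cast at this
      exact this
    have hne0 : Int.fract (nicfT α i)⁻¹ ≠ 0 := hf.ne_zero
    have h1 := Int.fract_nonneg (nicfT α i)⁻¹
    have h2 := Int.fract_lt_one (nicfT α i)⁻¹
    simp only [nicfT]
    split_ifs with hc
    · exact ⟨hf, lt_of_le_of_ne h1 (Ne.symm hne0), lt_of_le_of_ne hc hne⟩
    · refine ⟨?_, by linarith, by linarith⟩
      have := hf.intCast_sub 1
      simpa using this

lemma nT_A (hirr : Irrational α) (h0 : 0 < α) (h12 : α < 1 / 2) (i : ℕ) :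
    nicfT α i * (nicfA α (i+1) + nicfE α (i+2) * nicfT α (i+1)) = 1 := by
  obtain ⟨hi, hp, hl⟩ := nT_prop hirr h0 h12 i
  have hz : Int.fract (nicfT α i)⁻¹ ≠ 0 := by
    have := hi.inv
    unfold Int.fract
    exact (this.sub_intCast _).ne_zero
  have key : ((nicfA α (i+1) : ℝ) + nicfE α (i+2) * nicfT α (i+1)) = (nicfT α i)⁻¹ := by
    simp only [nicfT, nicfA, nicfE]
    split_ifs with hc
    · push_cast
      linarith [Int.floor_add_fract (nicfT α i)⁻¹]
    · have : ((⌈(nicfT α i)⁻¹⌉ : ℤ) : ℝ) = ⌊(nicfT α i)⁻¹⌋ + 1 := by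
        have h := Int.ceil_sub_self_eq hz
        have h' := Int.floor_add_fract (nicfT α i)⁻¹
        linarith
      rw [this]
      push_cast
      linarith [Int.floor_add_fract (nicfT α i)⁻¹]
  rw [key, mul_inv_cancel₀ hp.ne']

lemma nE_pm (i : ℕ) : nicfE α i = 1 ∨ nicfE α i = -1 := by
  match i with
  | 0 => left; rfl
  | 1 => left; rfl
  | i+2 => simp only [nicfE]; split_ifs <;> simp

lemma nA2 (hirr : Irrational α) (h0 : 0 < α) (h12 : α < 1 / 2) (i : ℕ) :
    2 ≤ nicfA α (i+1) ∧ (nicfA α (i+1) = 2 → nicfE α (i+2) = 1) := by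
  obtain ⟨hi, hp, hl⟩ := nT_prop hirr h0 h12 i
  have h2 : 2 < (nicfT α i)⁻¹ := by
    rw [lt_inv_comm₀ (by norm_num) hp]; linarith
  have h3 : 2 ≤ ⌊(nicfT α i)⁻¹⌋ := Int.le_floor.2 (by push_cast; linarith)
  have h4 : 2 < ⌈(nicfT α i)⁻¹⌉ := Int.lt_ceil.2 (by push_cast; linarith)
  simp only [nicfA, nicfE]
  split_ifs with hc
  · exact ⟨h3, fun _ => rfl⟩
  · exact ⟨h4.le, fun h => by omega⟩

lemma nD_succ (n : ℕ) : nicfD α (n+1) = nicfD α n * nicfT α n := by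
  simp [nicfD, Finset.prod_range_succ]

lemma nD_zero : nicfD α 0 = 1 := by simp [nicfD]

lemma nD_pos (hirr : Irrational α) (h0 : 0 < α) (h12 : α < 1 / 2) (n : ℕ) : 0 < nicfD α n :=
  Finset.prod_pos fun j _ => (nT_prop hirr h0 h12 j).2.1

lemma nD_shift (hirr : Irrational α) (h0 : 0 < α) (h12 : α < 1 / 2) (k n : ℕ) :
    nicfD α (k+n) ≤ nicfD α k * (1/2)^n := by
  induction n with
  | zero => simp
  | succ n ih =>
    rw [← add_assoc, nD_succ, pow_succ, ← mul_assoc]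
    have h := nT_prop hirr h0 h12 (k+n)
    exact mul_le_mul ih h.2.2.le h.2.1.le (mul_nonneg (nD_pos hirr h0 h12 k).le (by positivity))

lemma nD_rec (hirr : Irrational α) (h0 : 0 < α) (h12 : α < 1 / 2) (k : ℕ) :
    nicfD α k = nicfA α (k+1) * nicfD α (k+1) + nicfE α (k+2) * nicfD α (k+2) := by
  rw [nD_succ (k+1), nD_succ k]
  linear_combination (- nicfD α k) * nT_A hirr h0 h12 k

/-- sign of the next odd digit -/
noncomputable def sgn (α : ℝ) (k : ℕ) : ℤ := - (-1) ^ oddIdx α k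

lemma sgn_pm (k : ℕ) : sgn α k = 1 ∨ sgn α k = -1 := by
  unfold sgn
  rcases neg_one_pow_eq_or ℤ (oddIdx α k) with h | h <;> rw [h] <;> simp

lemma oddIdx_succ (k : ℕ) :
    oddIdx α (k+1) = oddIdx α k + if Odd (nicfA α (k+1)) then 1 else 0 := by
  unfold oddIdx
  rw [← Finset.insert_Icc_right_eq_Icc_add_one (by omega), Finset.filter_insert]
  split_ifs with h
  · rw [Finset.card_insert_of_notMem]
    simp
  · simp

lemma sgn_odd (k : ℕ) (h : Odd (nicfA α (k+1))) : sgn α (k+1) = - sgn α k := by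
  unfold sgn
  rw [oddIdx_succ, if_pos h, pow_succ]; ring

lemma sgn_even (k : ℕ) (h : ¬ Odd (nicfA α (k+1))) : sgn α (k+1) = sgn α k := by
  unfold sgn
  rw [oddIdx_succ, if_neg h, add_zero]

lemma lam_odd (k : ℕ) (h : Odd (nicfA α (k+1))) : lamStar α (k+1) = sgn α k := by
  unfold lamStar sgn
  rw [if_pos h, oddIdx_succ, if_pos h, pow_succ]; ring

lemma lam_even (k : ℕ) (h : ¬ Odd (nicfA α (k+1))) : lamStar α (k+1) = 0 := by
  unfold lamStar
  rw [if_neg h]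

lemma lam_abs (k : ℕ) : |(lamStar α k : ℝ)| ≤ 1 := by
  unfold lamStar
  split_ifs with h
  · rcases neg_one_pow_eq_or ℤ (oddIdx α k) with h | h <;> rw [h] <;> simp
  · simp

/-- tail sums -/
noncomputable def tS (α : ℝ) (k : ℕ) : ℝ :=
  ∑' j : ℕ, (lamStar α (k + 1 + j) : ℝ) * nicfD α (k + 1 + j)

lemma tS_bd (hirr : Irrational α) (h0 : 0 < α) (h12 : α < 1 / 2) (k j : ℕ) :
    ‖(lamStar α (k + 1 + j) : ℝ) * nicfD α (k + 1 + j)‖ ≤ nicfD α k * (1/2)^j := by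
  rw [Real.norm_eq_abs, abs_mul, abs_of_pos (nD_pos hirr h0 h12 _)]
  have h1 := nD_shift hirr h0 h12 (k+1) j
  have h2 := nD_shift hirr h0 h12 k 1
  have h3 := nD_pos hirr h0 h12 (k+1+j)
  have h4 := nD_pos hirr h0 h12 k
  have h5 : (0:ℝ) < (1/2)^j := by positivity
  have h6 := lam_abs (α := α) (k+1+j)
  nlinarith

lemma tS_summable (hirr : Irrational α) (h0 : 0 < α) (h12 : α < 1 / 2) (k : ℕ) :
    Summable fun j : ℕ => (lamStar α (k + 1 + j) : ℝ) * nicfD α (k + 1 + j) :=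
  Summable.of_norm_bounded ((summable_geometric_two).mul_left (nicfD α k)) (tS_bd hirr h0 h12 k)

lemma tS_abs (hirr : Irrational α) (h0 : 0 < α) (h12 : α < 1 / 2) (k : ℕ) :
    |tS α k| ≤ nicfD α k * 2 := by
  have := tsum_of_norm_bounded (hasSum_geometric_two.mul_left (nicfD α k)) (tS_bd hirr h0 h12 k)
  simpa [tS] using this

lemma tS_rec (hirr : Irrational α) (h0 : 0 < α) (h12 : α < 1 / 2) (k : ℕ) :
    tS α k = lamStar α (k+1) * nicfD α (k+1) + tS α (k+1) := by
  unfold tS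
  rw [(tS_summable hirr h0 h12 k).tsum_eq_zero_add]
  simp only [add_zero]
  congr 2
  funext j
  rw [show k + 1 + (j+1) = k+1+1+j by ring]

lemma two_gamma (hirr : Irrational α) (h0 : 0 < α) (h12 : α < 1 / 2) :
    2 * gammaStar α = 1 + α + tS α 0 := by
  have hg : Summable fun k : ℕ => nicfD α k + nicfE α (k+1) * nicfD α (k+1) := by
    refine Summable.of_norm_bounded ((summable_geometric_two).mul_left 2) fun k => ?_
    have h1 := nD_shift hirr h0 h12 0 k
    have h2 := nD_shift hirr h0 h12 k 1
    have h3 := nD_pos hirr h0 h12 k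
    have h4 := nD_pos hirr h0 h12 (k+1)
    rw [nD_zero, zero_add, one_mul] at h1
    rw [Real.norm_eq_abs, abs_le]
    rcases nE_pm (α := α) (k+1) with h | h <;> rw [h] <;> push_cast <;> constructor <;> linarith
  have hH := hg.hasSum
  have hH1 := (hasSum_nat_add_iff' 1).2 hH
  have hd := hH.sub hH1
  have hS := (tS_summable hirr h0 h12 0).hasSum
  have hA := (hd.add hS).div_const 2
  have e : gammaStar α = (1 + α + tS α 0)/2 := by
    unfold gammaStar
    have := hA.tsum_eq
    rw [show ∀ x y : ℝ, x - (x - y) = y by intros; ring] at this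
    have hE1 : nicfE α 1 = 1 := rfl
    have hD1 : nicfD α 1 = 1 * α := by simp [nicfD, nicfT]
    simp only [Finset.sum_range_one, nD_zero, hE1, zero_add, hD1] at this
    rw [tS]
    simp only [zero_add]
    rw [show (1 + α : ℝ) = 1 + ((1:ℤ):ℝ) * (1 * α) by push_cast; ring, ← this]
    congr 1
    funext k
    have hr := nD_rec hirr h0 h12 k
    rw [show 1 + k = k + 1 by ring]
    linear_combination (-1/2) * hr
  rw [e]; ring

/-- normalised tails -/
noncomputable def tz (α : ℝ) (k : ℕ) : ℝ := sgn α k * (tS α k / nicfD α k)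

lemma tz_abs (hirr : Irrational α) (h0 : 0 < α) (h12 : α < 1 / 2) (k : ℕ) :
    |tz α k| ≤ 2 := by
  have h1 := tS_abs hirr h0 h12 k
  have h2 := nD_pos hirr h0 h12 k
  have h3 : |tS α k / nicfD α k| ≤ 2 := by
    rw [abs_div, abs_of_pos h2, div_le_iff₀ h2]; linarith
  unfold tz
  rcases sgn_pm (α := α) k with h | h <;> rw [h] <;> push_cast
  · rwa [one_mul]
  · rwa [neg_one_mul, abs_neg]

lemma tS_div (hirr : Irrational α) (h0 : 0 < α) (h12 : α < 1 / 2) (k : ℕ) :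
    tS α k / nicfD α k = nicfT α k * (lamStar α (k+1) + tS α (k+1) / nicfD α (k+1)) := by
  have h1 := nD_pos hirr h0 h12 k
  have h2 := (nT_prop hirr h0 h12 k).2.1
  rw [tS_rec hirr h0 h12 k, nD_succ]
  field_simp

lemma tz_odd (hirr : Irrational α) (h0 : 0 < α) (h12 : α < 1 / 2) (k : ℕ)
    (h : Odd (nicfA α (k+1))) : tz α k = nicfT α k * (1 - tz α (k+1)) := by
  unfold tz
  rw [tS_div hirr h0 h12 k, lam_odd k h, sgn_odd k h]
  rcases sgn_pm (α := α) k with h | h <;> rw [h] <;> push_cast <;> ring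

lemma tz_even (hirr : Irrational α) (h0 : 0 < α) (h12 : α < 1 / 2) (k : ℕ)
    (h : ¬ Odd (nicfA α (k+1))) : tz α k = nicfT α k * tz α (k+1) := by
  unfold tz
  rw [tS_div hirr h0 h12 k, lam_even k h, sgn_even k h]
  push_cast; ring

lemma tz_bounds (hirr : Irrational α) (h0 : 0 < α) (h12 : α < 1 / 2) (k : ℕ) :
    0 ≤ tz α k ∧ tz α k ≤ nicfT α k := by
  have key : ∀ n k : ℕ, -(2 * (1/2:ℝ)^n) ≤ tz α k ∧ tz α k ≤ nicfT α k + 2 * (1/2:ℝ)^n := by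
    intro n
    induction n with
    | zero =>
      intro k
      have := abs_le.1 (tz_abs hirr h0 h12 k)
      have h2 := (nT_prop hirr h0 h12 k).2.1
      constructor <;> simp only [pow_zero] <;> linarith
    | succ n ih =>
      intro k
      obtain ⟨l, u⟩ := ih (k+1)
      have h2 := nT_prop hirr h0 h12 k
      have h3 := nT_prop hirr h0 h12 (k+1)
      rw [pow_succ]
      set δ : ℝ := (1/2:ℝ)^n
      have hδ : 0 < δ := by positivity
      by_cases h : Odd (nicfA α (k+1))
      · rw [tz_odd hirr h0 h12 k h]
        constructor <;> nlinarith
      · rw [tz_even hirr h0 h12 k h]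
        constructor <;> nlinarith
  have hl : Tendsto (fun n : ℕ => 2 * (1/2:ℝ)^n) atTop (nhds 0) := by
    have := (tendsto_pow_atTop_nhds_zero_of_lt_one (r := (1/2:ℝ)) (by norm_num)
      (by norm_num)).const_mul 2
    simpa using this
  constructor
  · have h := hl.neg
    rw [neg_zero] at h
    exact le_of_tendsto' h fun n => (key n k).1
  · have h := hl.const_add (nicfT α k)
    rw [add_zero] at h
    exact ge_of_tendsto' h fun n => (key n k).2

end Bridge


lemma big_den {α : ℝ} (hirr : Irrational α) (N : ℕ) :
    ∃ q : ℚ, |α - q| < 1 / (q.den : ℝ)^2 ∧ N ≤ q.den := by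
  by_contra hcon
  push Not at hcon
  have hinf := Real.infinite_rat_abs_sub_lt_one_div_den_sq_of_irrational hirr
  apply hinf
  obtain ⟨B, hB⟩ := exists_nat_gt ((|α| + 1) * N)
  have hfin : ((Set.Icc (-(B:ℤ)) B) ×ˢ (Set.Icc 0 N) : Set (ℤ × ℕ)).Finite :=
    (Set.finite_Icc _ _).prod (Set.finite_Icc _ _)
  refine (hfin.image fun p : ℤ × ℕ => (p.1 : ℚ) / p.2).subset ?_
  intro q hq
  have hd := hcon q hq
  have hq' : |α - q| < 1 / (q.den : ℝ)^2 := hq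
  have hp : (1:ℝ) ≤ q.den := by exact_mod_cast q.pos
  have h1 : |α - q| < 1 := by
    refine hq'.trans_le ?_
    rw [div_le_one (by positivity)]
    nlinarith
  have h2 : |(q:ℝ)| ≤ |α| + 1 := by
    have := abs_sub_abs_le_abs_sub (q:ℝ) α
    rw [abs_sub_comm] at this
    linarith
  have h3 : (q:ℝ) * q.den = q.num := by exact_mod_cast Rat.mul_den_eq_num q
  have h4 : |(q.num : ℝ)| ≤ B := by
    rw [← h3, abs_mul, abs_of_nonneg (by linarith : (0:ℝ) ≤ q.den)]
    have : (q.den : ℝ) ≤ N := by exact_mod_cast hd.le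
    have h5 := abs_nonneg α
    nlinarith
  have h5 : |q.num| ≤ (B:ℤ) := by exact_mod_cast h4
  refine ⟨(q.num, q.den), ⟨⟨(abs_le.1 h5).1, (abs_le.1 h5).2⟩, ⟨Nat.zero_le _, hd.le⟩⟩, ?_⟩
  exact Rat.num_div_den q

lemma freq6 {α : ℝ} (hirr : Irrational α) (γ : ℝ) :
    ∃ᶠ n : ℤ in Filter.cofinite, (|n| : ℝ) * nint (n * α - γ) ≤ 6 := by
  rw [Filter.frequently_cofinite_iff_infinite]
  refine Set.infinite_of_not_bddAbove ?_
  rintro ⟨b, hb⟩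
  obtain ⟨q, hq, hN⟩ := big_den hirr (b.toNat + 1)
  have hdpos : (0:ℤ) < q.den := by exact_mod_cast q.pos
  have hcop : IsCoprime q.num (q.den : ℤ) := by
    have := q.reduced
    rw [Int.isCoprime_iff_gcd_eq_one]
    exact this
  obtain ⟨x, y, hxy⟩ := hcop
  set r : ℤ := round ((q.den:ℝ) * γ) with hr
  set n : ℤ := q.den + (x * r) % q.den with hn
  have hm0 := Int.emod_nonneg (x * r) hdpos.ne'
  have hm1 := Int.emod_lt_of_pos (x * r) hdpos
  have hdm := Int.emod_add_mul_ediv (x * r) q.den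
  have hl : n * q.num = r + q.den * (q.num - q.num * (x * r / q.den) - r * y) := by
    have : (x * r) % q.den = x * r - q.den * (x * r / q.den) := by linarith
    rw [hn, this]
    linear_combination r * hxy
  set l := q.num - q.num * (x * r / q.den) - r * y with hldef
  have hle : (|n| : ℝ) * nint (n * α - γ) ≤ 6 := by
    have hD : (0:ℝ) < q.den := by exact_mod_cast q.pos
    have h1 : nint (n * α - γ) ≤ |n * α - γ - l| := round_le _ l
    have hnpos : (0:ℝ) < n := by exact_mod_cast (by omega : 0 < n)
    have hn2 : (n:ℝ) ≤ 2 * q.den := by exact_mod_cast (by omega : n ≤ 2 * q.den)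
    have h2 : (q.den:ℝ) * (n * α - γ - l) = q.den * n * (α - q) + (r - q.den * γ) := by
      have hl' : (n:ℝ) * q.num = r + q.den * l := by exact_mod_cast hl
      have h3 : (q:ℝ) * q.den = q.num := by exact_mod_cast Rat.mul_den_eq_num q
      linear_combination hl' + n * h3
    have h3 : |(r:ℝ) - q.den * γ| ≤ 1/2 := by
      rw [abs_sub_comm]; exact abs_sub_round _
    have h4 : (q.den:ℝ) * |n * α - γ - l| ≤ 5/2 := by
      rw [← abs_of_pos hD, ← abs_mul, h2]
      refine (abs_add_le _ _).trans ?_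
      rw [abs_mul, abs_mul, abs_of_pos hD, abs_of_pos hnpos]
      rw [lt_div_iff₀ (by positivity)] at hq
      have := abs_nonneg (α - q)
      nlinarith
    rw [abs_of_pos hnpos]
    have := abs_nonneg (n * α - γ - l)
    nlinarith
  have h6 := hb (show n ∈ {n : ℤ | (|n| : ℝ) * nint (n * α - γ) ≤ 6} from hle)
  omega

lemma Mval_le6 {α : ℝ} (hirr : Irrational α) (γ : ℝ) : Mval α γ ≤ 6 := by
  unfold Mval
  refine liminf_le_of_frequently_le (freq6 hirr γ) ?_
  exact isBoundedUnder_of ⟨0, fun n => mul_nonneg (abs_nonneg _) (abs_nonneg _)⟩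

lemma le_Mval {α : ℝ} (hirr : Irrational α) (γ c : ℝ)
    (h : ∀ η > 0, ∀ᶠ n : ℤ in Filter.cofinite, c - η ≤ (|n| : ℝ) * nint (n * α - γ)) :
    c ≤ Mval α γ := by
  refine le_of_forall_pos_le_add fun η hη => ?_
  have : c - η ≤ Mval α γ := by
    unfold Mval
    refine le_liminf_of_le ?_ (h η hη)
    refine ⟨6, fun a ha => ?_⟩
    obtain ⟨n, hn1, hn2⟩ := ((freq6 hirr γ).and_eventually (Filter.eventually_map.1 ha)).exists
    exact le_trans hn2 hn1
  linarith

lemma event_large {α : ℝ} (γ m C : ℝ) (hC : 0 ≤ C)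
    (h : ∀ n : ℤ, m ≤ (2 * |(n:ℝ)| + C) * (2 * nint (n * α - γ))) :
    ∀ η > 0, ∀ᶠ n : ℤ in Filter.cofinite, m/4 - η ≤ (|n| : ℝ) * nint (n * α - γ) := by
  intro η hη
  obtain ⟨N, hN⟩ := exists_nat_gt (|m| * (C+1) / η)
  rw [Filter.eventually_cofinite]
  refine (Set.finite_Icc (-(N:ℤ)) N).subset ?_
  intro n hn
  by_contra hcon
  apply hn
  have hnN : (N:ℝ) ≤ |(n:ℝ)| := by
    have : (N:ℤ) ≤ |n| := by
      rw [Set.mem_Icc, ← abs_le] at hcon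
      omega
    exact_mod_cast this
  have hx : 0 ≤ nint (n * α - γ) := abs_nonneg _
  have h1 := h n
  set x := nint (n * α - γ)
  by_cases hc : (C+1) * x ≤ η
  · nlinarith
  · push Not at hc
    rw [div_lt_iff₀ hη] at hN
    have h2 : |m| * (C+1) ≤ |(n:ℝ)| * ((C+1) * x) := by
      have := abs_nonneg (n:ℝ)
      nlinarith
    have h3 : |m| ≤ |(n:ℝ)| * x := by
      have : |m| * (C+1) ≤ (|(n:ℝ)| * x) * (C+1) := by linarith
      exact le_of_mul_le_mul_right this (by linarith)
    have := le_abs_self m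
    have := abs_nonneg m
    linarith

section Dyn
variable {α : ℝ}

/-- the integer dynamics -/
noncomputable def uv (α : ℝ) (u v : ℤ) : ℕ → ℤ × ℤ
  | 0 => (u, v)
  | k + 1 => (nicfE α (k+2) * (uv α u v k).2,
      nicfA α (k+1) * (uv α u v k).2 + (uv α u v k).1 - lamStar α (k+1))

lemma uv_odd (u v : ℤ) (hu : Odd u) (hv : Odd v) (k : ℕ) :
    Odd (uv α u v k).1 ∧ Odd (uv α u v k).2 := by
  induction k with
  | zero => exact ⟨hu, hv⟩
  | succ k ih =>
    refine ⟨?_, ?_⟩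
    · simp only [uv]
      rcases nE_pm (α := α) (k+2) with h | h <;> rw [h]
      · simpa using ih.2
      · simpa using ih.2
    · simp only [uv]
      by_cases h : Odd (nicfA α (k+1))
      · rw [lam_odd k h]
        have hs : Odd (sgn α k) := by
          rcases sgn_pm (α := α) k with h | h <;> rw [h] <;> decide
        exact ((h.mul ih.2).add_odd ih.1).sub_odd hs
      · rw [lam_even k h, sub_zero]
        rw [Int.not_odd_iff_even] at h
        exact (h.mul_right _).add_odd ih.1

lemma uv_const (hirr : Irrational α) (h0 : 0 < α) (h12 : α < 1 / 2) (u v : ℤ) (k : ℕ) :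
    nicfD α k * (uv α u v k).2 + nicfD α (k+1) * (uv α u v k).1 - tS α k =
      v + α * u - tS α 0 := by
  induction k with
  | zero => simp [uv, nicfD, nicfT]
  | succ k ih =>
    rw [← ih]
    simp only [uv]
    push_cast
    rw [tS_rec hirr h0 h12 k]
    linear_combination (-((uv α u v k).2 : ℝ)) * nD_rec hirr h0 h12 k

lemma uv_bound (hirr : Irrational α) (h0 : 0 < α) (h12 : α < 1 / 2) (k : ℕ) :
    ∃ C : ℝ, 0 ≤ C ∧ ∀ u v : ℤ, |v + α * u - tS α 0| ≤ 1 →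
      |((uv α u v k).1 : ℝ)| ≤ nicfD α k * (|(u:ℝ)| + C) := by
  induction k with
  | zero => exact ⟨0, le_rfl, fun u v _ => by simp [uv, nicfD]⟩
  | succ k ih =>
    obtain ⟨C, hC, h⟩ := ih
    have hD := nD_pos hirr h0 h12 k
    have hD1 := nD_pos hirr h0 h12 (k+1)
    refine ⟨C + (2 + 1 / nicfD α k) / nicfD α (k+1), by positivity, fun u v hW => ?_⟩
    have h1 := h u v hW
    have h2 := uv_const hirr h0 h12 u v k
    have h3 := tS_abs hirr h0 h12 k
    have h4 : |((uv α u v (k+1)).1 : ℝ)| = |((uv α u v k).2 : ℝ)| := by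
      simp only [uv]
      rcases nE_pm (α := α) (k+2) with h | h <;> rw [h] <;> push_cast
      · rw [one_mul]
      · rw [neg_one_mul, abs_neg]
    rw [h4]
    have h5 : nicfD α k * |((uv α u v k).2 : ℝ)| ≤
        nicfD α (k+1) * |((uv α u v k).1 : ℝ)| + nicfD α k * 2 + 1 := by
      rw [← abs_of_pos hD, ← abs_mul, abs_of_pos hD]
      have e : nicfD α k * ((uv α u v k).2 : ℝ) =
        -(nicfD α (k+1) * (uv α u v k).1) + tS α k + (v + α * u - tS α 0) := by linarith
      rw [e]
      refine (abs_add_three _ _ _).trans ?_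
      rw [abs_neg, abs_mul, abs_of_pos hD1]
      linarith
    have h6 : nicfD α (k+1) * (|(u:ℝ)| + (C + (2 + 1 / nicfD α k) / nicfD α (k+1))) =
        nicfD α (k+1) * (|(u:ℝ)| + C) + 2 + 1 / nicfD α k := by
      field_simp
      ring
    rw [h6]
    have h7 : nicfD α k * (nicfD α (k+1) * (|(u:ℝ)| + C) + 2 + 1 / nicfD α k) =
        nicfD α (k+1) * (nicfD α k * (|(u:ℝ)| + C)) + nicfD α k * 2 + 1 := by
      field_simp
    refine le_of_mul_le_mul_left ?_ hD
    rw [h7]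
    nlinarith

lemma main_bound (hirr : Irrational α) (h0 : 0 < α) (h12 : α < 1 / 2) {r Rs X θ Y θ2 m : ℝ}
    (h : Cst r Rs X θ Y θ2 m) (K : ℕ)
    (d : Dat r Rs X (fun i => nicfA α (K+i+1)) (fun i => nicfE α (K+i+1))
      (fun i => sgn α (K+i)) (fun i => nicfT α (K+i)) (fun i => tz α (K+i))) :
    ∃ C : ℝ, 0 ≤ C ∧ ∀ u v : ℤ, Odd u → Odd v → |v + α * u - tS α 0| ≤ 1 →
      m ≤ (|(u:ℝ)| + C) * |v + α * u - tS α 0| := by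
  obtain ⟨C, hC, hb⟩ := uv_bound hirr h0 h12 K
  refine ⟨C, hC, fun u v hu hv hW => ?_⟩
  have hcore := d.core h (fun i => (uv α u v (K+i)).1) (fun i => (uv α u v (K+i)).2)
    (uv_odd u v hu hv _).1 (uv_odd u v hu hv _).2 (fun i => rfl) (fun i => by
      have : (uv α u v (K+(i+1))).2 = nicfA α (K+i+1) * (uv α u v (K+i)).2 +
        (uv α u v (K+i)).1 - lamStar α (K+i+1) := rfl
      rw [this]
      split_ifs with ho
      · rw [lam_odd _ ho]
      · rw [lam_even _ ho])
  simp only [add_zero] at hcore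
  have hb' := hb u v hW
  have hD := nD_pos hirr h0 h12 K
  have hc := uv_const hirr h0 h12 u v K
  have hsz : (sgn α K : ℝ) * tz α K = tS α K / nicfD α K := by
    unfold tz
    rcases sgn_pm (α := α) K with h | h <;> rw [h] <;> push_cast <;> ring
  rw [hsz] at hcore
  have e : v + α * u - tS α 0 = nicfD α K * ((uv α u v K).2 + nicfT α K * (uv α u v K).1 -
      tS α K / nicfD α K) := by
    rw [← hc, nD_succ]; field_simp
  rw [e, abs_mul, abs_of_pos hD]
  refine hcore.trans ?_
  have := mul_le_mul_of_nonneg_right hb' (abs_nonneg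
    (((uv α u v K).2:ℝ) + nicfT α K * (uv α u v K).1 - tS α K / nicfD α K))
  linarith

lemma dat_of (hirr : Irrational α) (h0 : 0 < α) (h12 : α < 1 / 2) {r Rs X : ℝ} (K : ℕ)
    (ar : ∀ i, r ≤ nicfA α (K+i+1))
    (ao : ∀ i, Odd (nicfA α (K+i+1)) → (nicfA α (K+i+1) : ℝ) = Rs ∨ Rs + 2 ≤ nicfA α (K+i+1))
    (ae : ∀ i, ¬ Odd (nicfA α (K+i+1)) → X ≤ nicfA α (K+i+1) ∨ (nicfA α (K+i+1) = 2 ∧ r = 2)) :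
    Dat r Rs X (fun i => nicfA α (K+i+1)) (fun i => nicfE α (K+i+1))
      (fun i => sgn α (K+i)) (fun i => nicfT α (K+i)) (fun i => tz α (K+i)) where
  t0 i := (nT_prop hirr h0 h12 _).2.1
  t1 i := (nT_prop hirr h0 h12 _).2.2.le
  ht i := nT_A hirr h0 h12 (K+i)
  he i := nE_pm _
  ar := ar
  a2 i := (nA2 hirr h0 h12 (K+i)).1
  ao := ao
  ae := ae
  a2e i := (nA2 hirr h0 h12 (K+i)).2
  hs i := sgn_pm _
  so i := sgn_odd (K+i)
  se i := sgn_even (K+i)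
  zo i := tz_odd hirr h0 h12 (K+i)
  ze i := tz_even hirr h0 h12 (K+i)
  z0 i := (tz_bounds hirr h0 h12 _).1
  zt i := (tz_bounds hirr h0 h12 _).2

lemma final_of (hirr : Irrational α) (h0 : 0 < α) (h12 : α < 1 / 2) (m C : ℝ) (hm : 0 < m)
    (hC : 0 ≤ C)
    (hb : ∀ u v : ℤ, Odd u → Odd v → |v + α * u - tS α 0| ≤ 1 →
      m ≤ (|(u:ℝ)| + C) * |v + α * u - tS α 0|) :
    m/4 ≤ Mval α (gammaStar α) ∧ m/4 ≤ rho α := by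
  have hg := two_gamma hirr h0 h12
  have e : ∀ n p : ℤ, ((-(2*p+1) : ℤ) : ℝ) + α * ((2*n-1 : ℤ):ℝ) - tS α 0 =
      2 * (n * α - gammaStar α - p) := by
    intro n p
    push_cast
    linear_combination hg
  have key : ∀ n : ℤ, m ≤ (2 * |(n:ℝ)| + (C+1)) * (2 * nint (n * α - gammaStar α)) := by
    intro n
    have h1 := hb (2*n-1) (-(2 * round (n * α - gammaStar α) + 1)) ⟨n-1, by ring⟩
      (Odd.neg ⟨_, rfl⟩)
    rw [e, abs_mul, abs_of_pos (by norm_num : (0:ℝ) < 2)] at h1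
    have h2 : |n * α - gammaStar α - round (n * α - gammaStar α)| ≤ 1/2 := abs_sub_round _
    have h3 := h1 (by linarith)
    refine h3.trans ?_
    unfold nint
    refine mul_le_mul_of_nonneg_right ?_ (by positivity)
    have : |((2*n-1 : ℤ):ℝ)| ≤ 2 * |(n:ℝ)| + 1 := by
      push_cast
      refine (abs_sub _ _).trans ?_
      rw [abs_mul]; simp
    linarith
  have hM : m/4 ≤ Mval α (gammaStar α) :=
    le_Mval hirr _ _ (event_large _ _ (C+1) (by linarith) key)
  refine ⟨hM, hM.trans ?_⟩
  unfold rho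
  refine le_csSup ⟨6, ?_⟩ ⟨gammaStar α, ?_, rfl⟩
  · rintro x ⟨γ, _, rfl⟩
    exact Mval_le6 hirr γ
  · rintro ⟨p, q, hpq⟩
    have h1 := hb (2*q-1) (-(2*(-p)+1)) ⟨q-1, by ring⟩ (Odd.neg ⟨_, rfl⟩)
    rw [e, hpq] at h1
    have : 2 * ((q:ℝ) * α - (p + q * α) - ((-p : ℤ) : ℝ)) = 0 := by push_cast; ring
    rw [this] at h1
    simp at h1
    linarith

end Dyn


lemma cst_pos {r Rs X θ Y θ2 m : ℝ} (h : Cst r Rs X θ Y θ2 m) : 0 < m := by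
  have h1 := h.hRs3
  have h2 := h.hX4
  have h3 := h.h21
  have h4 := h.hθ0
  have h5 := h.hθ
  have h6 := h.hY
  have h7 : θ < 1/2 := by nlinarith
  have h8 : Y < 1 := by
    by_contra hc
    push Not at hc
    nlinarith
  have h9 : 0 < (Rs - θ2) * (X + θ) - 1 := by nlinarith
  have h10 : 0 < (X + θ - 1 - Y) * (Rs - θ2 - 2) := mul_pos (by linarith) (by linarith)
  rw [← h.hm] at h10
  exact pos_of_mul_pos_left h10 h9.le

lemma cst_of (R : ℕ) (hR2 : 2 ≤ R) (Rs Rss θ1 θ2 M1 : ℝ)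
    (hRs : Rs = if Odd R then (R : ℝ) else (R : ℝ) + 1)
    (hRss : Rss = if Even R then (R : ℝ) else (R : ℝ) + 1)
    (hθ1 : θ1 = (Real.sqrt (Rs ^ 2 + 4) - Rs) / 2)
    (hθ2 : θ2 = if 3 ≤ R then (Rss - Real.sqrt (Rss ^ 2 - 4)) / 2 else 1 / 2)
    (hM1 : M1 = 1 / 4 * (1 - 2 / (Rs - θ2)) *
        (1 - 1 / max 4 Rss * (1 + θ1 ^ 2 / (1 - θ1))) /
        (1 + 1 / max 4 Rss * (θ1 - 1 / (Rs - θ2)))) :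
    Cst R Rs (max 4 Rss) θ1 (θ1/(1-θ1)) θ2 (4 * M1) := by
  have hR2' : (2:ℝ) ≤ R := by exact_mod_cast hR2
  have hRs3 : 3 ≤ Rs := by
    rw [hRs]
    split_ifs with ho
    · have : 3 ≤ R := by obtain ⟨k, hk⟩ := ho; omega
      exact_mod_cast this
    · linarith
  have hw := Real.sq_sqrt (show 0 ≤ Rs^2+4 by positivity)
  have hw0 := Real.sqrt_nonneg (Rs^2+4)
  have hθ : θ1 * (Rs + θ1) = 1 := by
    rw [hθ1]; linear_combination (1/4) * hw
  have hθ0 : 0 < θ1 := by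
    have : Rs < Real.sqrt (Rs^2+4) := Real.lt_sqrt_of_sq_lt (by linarith)
    rw [hθ1]; linarith
  have hθlt : θ1 < 1/2 := by nlinarith
  have hS : 3 ≤ R → 4 ≤ Rss := by
    intro h3
    rw [hRss]
    split_ifs with he
    · have : 4 ≤ R := by obtain ⟨k, hk⟩ := he; omega
      exact_mod_cast this
    · have : (3:ℝ) ≤ R := by exact_mod_cast h3
      linarith
  have hθ2' : 0 < θ2 ∧ θ2 ≤ 1/2 ∧ (3 ≤ R → θ2 * (max 4 Rss - θ2) = 1) := by
    by_cases h3 : 3 ≤ R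
    · have h4 := hS h3
      rw [if_pos h3] at hθ2
      have hv := Real.sq_sqrt (show 0 ≤ Rss^2-4 by nlinarith)
      have hv1 : Real.sqrt (Rss^2-4) < Rss := by
        rw [Real.sqrt_lt' (by linarith)]; linarith
      have hv2 : Rss - 1 ≤ Real.sqrt (Rss^2-4) := Real.le_sqrt_of_sq_le (by nlinarith)
      refine ⟨by linarith, by linarith, fun _ => ?_⟩
      rw [max_eq_right h4, hθ2]
      linear_combination (-1/4) * hv
    · rw [if_neg h3] at hθ2
      exact ⟨by linarith, by linarith, fun h => absurd h h3⟩
  obtain ⟨h20, h21, h2e⟩ := hθ2'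
  have hX4 : 4 ≤ max 4 Rss := le_max_left _ _
  refine ⟨?_, hθ, hθ0, ?_, h20, h21, ?_⟩
  · rcases Nat.lt_or_ge R 5 with h5 | h5
    · interval_cases R
      · left
        have e1 : ¬ Odd 2 := by decide
        have e2 : Even 2 := by decide
        rw [if_neg e1] at hRs
        rw [if_pos e2] at hRss
        rw [if_neg (by norm_num)] at hθ2
        refine ⟨by norm_num, by rw [hRs]; norm_num, ?_, hθ2⟩
        rw [hRss]; norm_num
      · right; left
        have e1 : Odd 3 := by decide
        have e2 : ¬ Even 3 := by decide
        rw [if_pos e1] at hRs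
        rw [if_neg e2] at hRss
        refine ⟨by norm_num, by rw [hRs]; norm_num, ?_, h2e le_rfl⟩
        rw [hRss]; norm_num
      · right; right; left
        have e1 : ¬ Odd 4 := by decide
        have e2 : Even 4 := by decide
        rw [if_neg e1] at hRs
        rw [if_pos e2] at hRss
        refine ⟨by norm_num, by rw [hRs]; norm_num, ?_, h2e (by norm_num)⟩
        rw [hRss]; norm_num
    · have h5' : (5:ℝ) ≤ R := by exact_mod_cast h5
      right; right; right
      rw [max_eq_right (hS (by omega))] at h2e ⊢
      by_cases ho : Odd R
      · left
        rw [if_pos ho] at hRs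
        rw [if_neg (by rwa [Nat.not_even_iff_odd])] at hRss
        exact ⟨h5', hRs, hRss, h2e (by omega)⟩
      · right
        rw [if_neg ho] at hRs
        rw [if_pos (by rwa [Nat.not_odd_iff_even] at ho)] at hRss
        have : 6 ≤ R := by
          rw [Nat.not_odd_iff_even] at ho
          obtain ⟨k, hk⟩ := ho; omega
        exact ⟨by exact_mod_cast this, hRs, hRss, h2e (by omega)⟩
  · rw [div_mul_cancel₀]; linarith
  · rw [hM1]
    generalize max 4 Rss = X at hX4
    have p1 : 0 < Rs - θ2 := by linarith
    have p2 : 0 < 1 - θ1 := by linarith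
    have p3 : 0 < X := by linarith
    have p4 : 0 < (Rs - θ2) * (X + θ1) - 1 := by nlinarith
    have e1 : 1 + 1 / X * (θ1 - 1 / (Rs - θ2)) =
        ((Rs - θ2) * (X + θ1) - 1) / (X * (Rs - θ2)) := by
      field_simp; ring
    rw [e1]
    field_simp
    ring

theorem stmt1 (α : ℝ) (hirr : Irrational α) (h0 : 0 < α) (h12 : α < 1 / 2)
    (R : ℕ) (hR2 : 2 ≤ R)
    (hbd : ∀ᶠ i in Filter.atTop, (R : ℤ) ≤ nicfA α i)
    (hfreq : ∃ᶠ i in Filter.atTop, nicfA α i = (R : ℤ))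
    (Rs Rss θ1 θ2 M1 : ℝ)
    (hRs : Rs = if Odd R then (R : ℝ) else (R : ℝ) + 1)
    (hRss : Rss = if Even R then (R : ℝ) else (R : ℝ) + 1)
    (hθ1 : θ1 = (Real.sqrt (Rs ^ 2 + 4) - Rs) / 2)
    (hθ2 : θ2 = if 3 ≤ R then (Rss - Real.sqrt (Rss ^ 2 - 4)) / 2 else 1 / 2)
    (hM1 : M1 = 1 / 4 * (1 - 2 / (Rs - θ2)) *
        (1 - 1 / max 4 Rss * (1 + θ1 ^ 2 / (1 - θ1))) /
        (1 + 1 / max 4 Rss * (θ1 - 1 / (Rs - θ2)))) :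
    Mval α (gammaStar α) ≥ M1 ∧ rho α ≥ M1 := by
  have hC := cst_of R hR2 Rs Rss θ1 θ2 M1 hRs hRss hθ1 hθ2 hM1
  obtain ⟨K, hK⟩ := Filter.eventually_atTop.1 hbd
  have hA : ∀ i, (R:ℤ) ≤ nicfA α (K+i+1) := fun i => hK _ (by omega)
  have d : Dat (R:ℝ) Rs (max 4 Rss) (fun i => nicfA α (K+i+1)) (fun i => nicfE α (K+i+1))
      (fun i => sgn α (K+i)) (fun i => nicfT α (K+i)) (fun i => tz α (K+i)) := by
    refine dat_of hirr h0 h12 K (fun i => by exact_mod_cast hA i) ?_ ?_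
    · intro i ho
      have hi := hA i
      generalize nicfA α (K+i+1) = b at ho hi
      rw [hRs]
      obtain ⟨k, hk⟩ := ho
      split_ifs with hR
      · obtain ⟨j, hj⟩ := hR
        have : b = R ∨ (R:ℤ) + 2 ≤ b := by omega
        exact_mod_cast this
      · rw [Nat.not_odd_iff_even] at hR
        obtain ⟨j, hj⟩ := hR
        have : b = R + 1 ∨ (R:ℤ) + 1 + 2 ≤ b := by omega
        exact_mod_cast this
    · intro i ho
      have hi := hA i
      generalize nicfA α (K+i+1) = b at ho hi
      rw [Int.not_odd_iff_even] at ho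
      obtain ⟨k, hk⟩ := ho
      by_cases hb : b = 2
      · right
        refine ⟨hb, ?_⟩
        have : R = 2 := by omega
        exact_mod_cast this
      · left
        refine max_le ?_ ?_
        · have : 4 ≤ b := by omega
          exact_mod_cast this
        · rw [hRss]
          split_ifs with hR
          · exact_mod_cast hi
          · rw [Nat.not_even_iff_odd] at hR
            obtain ⟨j, hj⟩ := hR
            have : (R:ℤ) + 1 ≤ b := by omega
            exact_mod_cast this
  obtain ⟨C, hC0, hb⟩ := main_bound hirr h0 h12 hC K d
  have hf := final_of hirr h0 h12 (4 * M1) C (cst_pos hC) hC0 hb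
  rw [mul_div_cancel_left₀ _ (by norm_num : (4:ℝ) ≠ 0)] at hf
  exact hf
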